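/- There exists a constant C₀ > 0 depending only on a₀ such that if ε₀⁻²/C₀ ≤ β ≤ λ, then for every τ ∈ (0,1): (1 - τ)² (|K| β / (2π e^{t₀})) Σ_{k=0}^∞ [λ - 1/4 - C₀/(τ ε₀)² - (2k+1)β]₊⁰ ≤ N(λ; q^{A⁰,0}_K), where [ρ]₊⁰ = 1 if ρ > 0 and 0 otherwise. -/

import Mathlib

open MeasureTheory Real Filter

noncomputable section

/-- The upper half-plane ℍ as a subset of ℝ². -/
def UHP : Set (ℝ × ℝ) := {p : ℝ × ℝ | 0 < p.2}

/-- The hyperbolic measure `dv = y⁻² dx dy` on ℍ. -/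
def volH : Measure (ℝ × ℝ) :=
  (volume.restrict UHP).withDensity fun p => ENNReal.ofReal ((p.2 ^ 2)⁻¹)

/-- x-derivative of a complex function on ℝ². -/
def dX (f : ℝ × ℝ → ℂ) (p : ℝ × ℝ) : ℂ := fderiv ℝ f p (1, 0)

/-- y-derivative of a complex function on ℝ². -/
def dY (f : ℝ × ℝ → ℂ) (p : ℝ × ℝ) : ℂ := fderiv ℝ f p (0, 1)

/-- x-derivative of a real function on ℝ². -/
def dXr (f : ℝ × ℝ → ℝ) (p : ℝ × ℝ) : ℝ := fderiv ℝ f p (1, 0)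

/-- y-derivative of a real function on ℝ². -/
def dYr (f : ℝ × ℝ → ℝ) (p : ℝ × ℝ) : ℝ := fderiv ℝ f p (0, 1)

/-- The magnetic field `b̃ = y² (∂ₓA₂ - ∂_yA₁)`. -/
def fieldB (A₁ A₂ : ℝ × ℝ → ℝ) (p : ℝ × ℝ) : ℝ := p.2 ^ 2 * (dXr A₂ p - dYr A₁ p)

/-- The magnetic intensity `b = |b̃|`. -/
def intenB (A₁ A₂ : ℝ × ℝ → ℝ) (p : ℝ × ℝ) : ℝ := |fieldB A₁ A₂ p|

/-- Smooth compactly supported test functions with support inside a set `Ω`. -/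
def IsTestOn (Ω : Set (ℝ × ℝ)) (f : ℝ × ℝ → ℂ) : Prop :=
  ContDiff ℝ (⊤ : ℕ∞) f ∧ HasCompactSupport f ∧ tsupport f ⊆ Ω

/-- The quadratic form of the magnetic Laplacian on ℍ. -/
def qA (A₁ A₂ : ℝ × ℝ → ℝ) (f : ℝ × ℝ → ℂ) : ℝ :=
  ∫ p, p.2 ^ 2 * (‖-Complex.I * dX f p - (A₁ p : ℂ) * f p‖ ^ 2 +
    ‖-Complex.I * dY f p - (A₂ p : ℂ) * f p‖ ^ 2) ∂volH

/-- hyperbolic distance from `(x,y)` to `(0,1)`. -/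
def hDist (p : ℝ × ℝ) : ℝ :=
  2 * Real.arsinh (Real.sqrt (p.1 ^ 2 + (p.2 - 1) ^ 2) / (2 * Real.sqrt p.2))

/-- (H1) : the magnetic intensity tends to +∞ at infinity. -/
def H1 (A₁ A₂ : ℝ × ℝ → ℝ) : Prop :=
  ∀ M : ℝ, ∃ R : ℝ, ∀ p ∈ UHP, R ≤ hDist p → M ≤ intenB A₁ A₂ p

/-- (H2) : control of the derivative of the magnetic field. -/
def H2 (C₀ : ℝ) (A₁ A₂ : ℝ × ℝ → ℝ) : Prop :=
  ∀ p ∈ UHP, p.2 * Real.sqrt ((dXr (fieldB A₁ A₂) p) ^ 2 + (dYr (fieldB A₁ A₂) p) ^ 2)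
    ≤ C₀ * (intenB A₁ A₂ p + 1)

/-- Counting function of a quadratic form `q` with form domain `dom` and squared
norm `nsq`, via Glazman's lemma. -/
def NN (q : (ℝ × ℝ → ℂ) → ℝ) (dom : Set (ℝ × ℝ → ℂ)) (nsq : (ℝ × ℝ → ℂ) → ℝ)
    (lam : ℝ) : ℕ :=
  sSup {n : ℕ | ∃ V : Submodule ℂ (ℝ × ℝ → ℂ), (V : Set (ℝ × ℝ → ℂ)) ⊆ dom ∧
    Module.finrank ℂ V = n ∧ ∀ u ∈ V, u ≠ 0 → q u < lam * nsq u}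

/-- Heaviside function `[ρ]₊⁰`. -/
def heav (ρ : ℝ) : ℝ := if 0 < ρ then 1 else 0


/-- The rectangle `K = X₀ + K₀` with `K₀ = (-ε₀ a e^{t₀}/2, ε₀ a e^{t₀}/2) × (-ε₀/2, ε₀/2)`. -/
def Krect (x₀ t₀ a ε₀ : ℝ) : Set (ℝ × ℝ) :=
  Set.Ioo (x₀ - ε₀ * a * Real.exp t₀ / 2) (x₀ + ε₀ * a * Real.exp t₀ / 2) ×ˢ
    Set.Ioo (t₀ - ε₀ / 2) (t₀ + ε₀ / 2)

/-- `Ã₁(x,t) = -∫_{e^{t₀}}^{e^t} b̃(x,s) s⁻² ds`. -/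
def Atil (A₁ A₂ : ℝ × ℝ → ℝ) (t₀ : ℝ) (p : ℝ × ℝ) : ℝ :=
  -∫ s in Real.exp t₀..Real.exp p.2, fieldB A₁ A₂ (p.1, s) / s ^ 2

/-- `A₁⁰(x,t) = -(t - t₀) e^{-t₀} b̃₀`. -/
def Azero (t₀ b₀ : ℝ) (p : ℝ × ℝ) : ℝ := -(p.2 - t₀) * Real.exp (-t₀) * b₀

/-- The Dirichlet form `q̂^Ã_K`. -/
def qhatK (A₁ A₂ : ℝ × ℝ → ℝ) (x₀ t₀ a ε₀ : ℝ) (w : ℝ × ℝ → ℂ) : ℝ :=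
  ∫ p in Krect x₀ t₀ a ε₀,
    (Real.exp (2 * p.2) * ‖-Complex.I * dX w p - (Atil A₁ A₂ t₀ p : ℂ) * w p‖ ^ 2
      + ‖dY w p‖ ^ 2 + (1/4) * ‖w p‖ ^ 2)

/-- The Dirichlet form `q̂^{Ã,0}_K` (with frozen factor `e^{2t₀}`). -/
def qhatK0 (A₁ A₂ : ℝ × ℝ → ℝ) (x₀ t₀ a ε₀ : ℝ) (w : ℝ × ℝ → ℂ) : ℝ :=
  ∫ p in Krect x₀ t₀ a ε₀,
    (Real.exp (2 * t₀) * ‖-Complex.I * dX w p - (Atil A₁ A₂ t₀ p : ℂ) * w p‖ ^ 2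
      + ‖dY w p‖ ^ 2 + (1/4) * ‖w p‖ ^ 2)

/-- The Dirichlet form `q^{A⁰,0}_K` of the frozen constant magnetic field `b̃₀`. -/
def qK0 (x₀ t₀ a ε₀ b₀ : ℝ) (w : ℝ × ℝ → ℂ) : ℝ :=
  ∫ p in Krect x₀ t₀ a ε₀,
    (Real.exp (2 * t₀) * ‖-Complex.I * dX w p - (Azero t₀ b₀ p : ℂ) * w p‖ ^ 2
      + ‖dY w p‖ ^ 2 + (1/4) * ‖w p‖ ^ 2)


/-- Dirichlet eigenvalue counting function of `q^{A⁰,0}_K` on `L²(K)`. -/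
def NK0 (x₀ t₀ a ε₀ b₀ lam : ℝ) : ℕ :=
  NN (qK0 x₀ t₀ a ε₀ b₀) {w | IsTestOn (Krect x₀ t₀ a ε₀) w}
    (fun w => ∫ p in Krect x₀ t₀ a ε₀, ‖w p‖ ^ 2) lam


/-!
Stack `N` vertical translates of `K`, slightly overlapping, into a tall strip. On the strip,
functions `∑ᵣ e^{iξᵣx} fᵣ(t)` whose frequencies share one quasi-period decouple under the magnetic
form into harmonic oscillators `-∂ₜ² + b₀²(t - mᵣ)²`, whose lowest levels are `(2k + 1)|b₀|`; the
wells `mᵣ` form a lattice of spacing `2πe^{t₀}/(l₁|b₀|)`, where `l₁` is the horizontal quasi-period.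
Smooth cutoffs whose squares sum to one across the translates cost at most `C/(τε₀)²` (the IMS
localization formula), and send the trial space to `N` copies of the test functions on `K`, with a
negative sum of shifted forms. The trial space then has dimension at most `N` times the maximal
dimension of a negative subspace on one copy, and letting `N → ∞` gives the bound. That maximal
dimension is finite by a Poincaré inequality on small squares, so the supremum defining the counting
function is attained rather than a junk value.
-/

section NegativeSubspaces

variable {𝕜 D : Type*} [RCLike 𝕜] [AddCommGroup D] [Module 𝕜 D] {B : D →ₗ⋆[𝕜] D →ₗ[𝕜] 𝕜}
  {W : Submodule 𝕜 D} {u : D}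

/-- A subspace on which the sesquilinear form `B` is negative definite; the eigenvalue counting
function of a quadratic form is the largest dimension of such a subspace. -/
def IsNegDefOn (B : D →ₗ⋆[𝕜] D →ₗ[𝕜] 𝕜) (W : Submodule 𝕜 D) : Prop :=
  ∀ u ∈ W, u ≠ 0 → RCLike.re (B u u) < 0

lemma isNegDefOn_bot : IsNegDefOn B ⊥ := fun _ hu hu0 ↦ (hu0 ((Submodule.mem_bot 𝕜).1 hu)).elim

lemma IsNegDefOn.re_apply_self_nonpos (hW : IsNegDefOn B W) (hu : u ∈ W) :
    RCLike.re (B u u) ≤ 0 := by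
  rcases eq_or_ne u 0 with rfl | hu0
  · simp
  · exact (hW u hu hu0).le

lemma IsNegDefOn.finrank_le_card (hW : IsNegDefOn B W) {ι : Type*} [Fintype ι]
    (φ : ι → D →ₗ[𝕜] 𝕜) (hφ : ∀ u, (∀ i, φ i u = 0) → 0 ≤ RCLike.re (B u u)) :
    Module.finrank 𝕜 W ≤ Fintype.card ι := by
  by_contra! hlt
  have : FiniteDimensional 𝕜 W := Module.finite_of_finrank_pos (by omega)
  let Φ : W →ₗ[𝕜] ι → 𝕜 := LinearMap.pi fun i ↦ φ i ∘ₗ W.subtype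
  have hker : LinearMap.ker Φ ≠ ⊥ := LinearMap.ker_ne_bot_of_finrank_lt (by simpa using hlt)
  obtain ⟨v, hv, hv0⟩ := Submodule.exists_mem_ne_zero_of_ne_bot hker
  exact (hφ v fun i ↦ congrFun (LinearMap.mem_ker.1 hv) i).not_gt
    (hW v v.2 fun h0 ↦ hv0 (Subtype.ext h0))

lemma re_apply_add_smul_self (hB : B.IsSymm) {w : D} (hwu : B w u = 0) (c : 𝕜) :
    RCLike.re (B (w + c • u) (w + c • u)) = RCLike.re (B w w) + ‖c‖ ^ 2 * RCLike.re (B u u) := by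
  have huw : B u w = 0 := hB.eq_iff.1 hwu
  simp only [map_add, map_smulₛₗ, LinearMap.add_apply, LinearMap.smul_apply, smul_eq_mul, hwu, huw,
    RingHom.id_apply, mul_zero, add_zero, zero_add]
  rw [← mul_assoc, RCLike.mul_conj, ← RCLike.ofReal_pow, RCLike.re_ofReal_mul]

lemma IsNegDefOn.sup_span_singleton (hB : B.IsSymm) (hW : IsNegDefOn B W)
    (horth : ∀ w ∈ W, B w u = 0) (hu : RCLike.re (B u u) < 0) :
    IsNegDefOn B (W ⊔ Submodule.span 𝕜 {u}) := by
  intro v hv hv0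
  obtain ⟨w, hw, y, hy, rfl⟩ := Submodule.mem_sup.1 hv
  obtain ⟨c, rfl⟩ := Submodule.mem_span_singleton.1 hy
  rw [re_apply_add_smul_self hB (horth w hw)]
  rcases eq_or_ne c 0 with rfl | hc
  · simpa using hW w hw (by simpa using hv0)
  · have hcu : ‖c‖ ^ 2 * RCLike.re (B u u) < 0 := mul_neg_of_pos_of_neg (by positivity) hu
    linarith [hW.re_apply_self_nonpos hw]

lemma finrank_sup_span_singleton_of_notMem [FiniteDimensional 𝕜 W] (hu : u ∉ W) :
    Module.finrank 𝕜 ↥(W ⊔ Submodule.span 𝕜 {u}) = Module.finrank 𝕜 W + 1 := by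
  have hu0 : u ≠ 0 := fun h ↦ hu (h ▸ W.zero_mem)
  have hdim := Submodule.finrank_sup_add_finrank_inf_eq W (Submodule.span 𝕜 {u})
  rwa [((Submodule.disjoint_span_singleton' hu0).2 hu).eq_bot, finrank_bot, add_zero,
    finrank_span_singleton hu0] at hdim

lemma re_apply_self_nonneg_of_orthogonal (hB : B.IsSymm) [FiniteDimensional 𝕜 W]
    (hW : IsNegDefOn B W)
    (hmax : ∀ V, IsNegDefOn B V → Module.finrank 𝕜 V ≤ Module.finrank 𝕜 W)
    (horth : ∀ w ∈ W, B w u = 0) : 0 ≤ RCLike.re (B u u) := by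
  by_contra! hu
  have huW : u ∉ W := fun h ↦ by simp [horth u h] at hu
  have hlarger := hmax _ (hW.sup_span_singleton hB horth hu)
  rw [finrank_sup_span_singleton_of_notMem huW] at hlarger
  omega

lemma exists_finrank_maximal_isNegDefOn {n : ℕ}
    (hn : ∀ V : Submodule 𝕜 D, IsNegDefOn B V → Module.finrank 𝕜 V ≤ n) :
    ∃ W : Submodule 𝕜 D, FiniteDimensional 𝕜 W ∧ IsNegDefOn B W ∧
      ∀ V : Submodule 𝕜 D, IsNegDefOn B V → Module.finrank 𝕜 V ≤ Module.finrank 𝕜 W := by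
  let dims : Set ℕ := {m | ∃ V : Submodule 𝕜 D, IsNegDefOn B V ∧ Module.finrank 𝕜 V = m}
  have hbdd : BddAbove dims := ⟨n, by rintro _ ⟨V, hV, rfl⟩; exact hn V hV⟩
  obtain ⟨W, hW, hWdim⟩ : sSup dims ∈ dims :=
    Nat.sSup_mem ⟨0, ⊥, isNegDefOn_bot, finrank_bot _ _⟩ hbdd
  have hmax : ∀ V : Submodule 𝕜 D, IsNegDefOn B V → Module.finrank 𝕜 V ≤ Module.finrank 𝕜 W :=
    fun V hV ↦ hWdim ▸ le_csSup hbdd ⟨V, hV, rfl⟩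
  -- An infinite-dimensional subspace has `finrank` zero, in which case `⊥` is maximal as well.
  rcases Nat.eq_zero_or_pos (Module.finrank 𝕜 W) with h0 | hpos
  · exact ⟨⊥, inferInstance, isNegDefOn_bot, fun V hV ↦ (hmax V hV).trans (by simp [h0])⟩
  · exact ⟨W, Module.finite_of_finrank_pos hpos, hW, hmax⟩

-- If `dim E` were larger, some `v ≠ 0` would have every `T j v` orthogonal to a maximal negative
-- definite subspace, where `B` is nonnegative.
theorem finrank_le_card_mul_of_sum_neg (hB : B.IsSymm) {n : ℕ}
    (hn : ∀ V : Submodule 𝕜 D, IsNegDefOn B V → Module.finrank 𝕜 V ≤ n)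
    {E J : Type*} [AddCommGroup E] [Module 𝕜 E] [FiniteDimensional 𝕜 E] [Fintype J]
    (T : J → E →ₗ[𝕜] D) (hT : ∀ v, v ≠ 0 → ∑ j, RCLike.re (B (T j v) (T j v)) < 0) :
    Module.finrank 𝕜 E ≤ Fintype.card J * n := by
  obtain ⟨W, _, hW, hmax⟩ := exists_finrank_maximal_isNegDefOn hn
  suffices h : Module.finrank 𝕜 E ≤ Fintype.card J * Module.finrank 𝕜 W from
    h.trans (Nat.mul_le_mul_left _ (hn W hW))
  by_contra! hlt
  let w := Module.finBasis 𝕜 W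
  let Φ : E →ₗ[𝕜] J × Fin (Module.finrank 𝕜 W) → 𝕜 :=
    LinearMap.pi fun ji ↦ B (w ji.2) ∘ₗ T ji.1
  have hker : LinearMap.ker Φ ≠ ⊥ := LinearMap.ker_ne_bot_of_finrank_lt (by simpa using hlt)
  obtain ⟨v, hv, hv0⟩ := Submodule.exists_mem_ne_zero_of_ne_bot hker
  have horth : ∀ j, ∀ x ∈ W, B x (T j v) = 0 := by
    intro j x hx
    have hvanish : (B.flip (T j v)) ∘ₛₗ W.subtype = 0 :=
      w.ext fun i ↦ congrFun (LinearMap.mem_ker.1 hv) (j, i)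
    exact LinearMap.congr_fun hvanish ⟨x, hx⟩
  have hnonneg : 0 ≤ ∑ j, RCLike.re (B (T j v) (T j v)) :=
    Finset.sum_nonneg fun j _ ↦ re_apply_self_nonneg_of_orthogonal hB hW hmax (horth j)
  exact hnonneg.not_gt (hT v hv0)

end NegativeSubspaces

section L2Form

variable {α E : Type*} [MeasurableSpace α] {μ : Measure α} [AddCommMonoid E] [Module ℂ E]

/-- A linear map into square-integrable functions, as a linear map into the Hilbert space `L²(μ)`,
so that quadratic expressions in its values become Hermitian forms. -/
def l2Map (L : E →ₗ[ℂ] α → ℂ) (hL : ∀ u, MemLp (L u) 2 μ) : E →ₗ[ℂ] Lp ℂ 2 μ where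
  toFun u := (hL u).toLp (L u)
  map_add' u v := by simp only [map_add]; exact MemLp.toLp_add (hL u) (hL v)
  map_smul' c u := by simp only [map_smul]; exact MemLp.toLp_const_smul c (hL u)

/-- The Hermitian form whose quadratic form is `u ↦ ∫ ‖L u‖² dμ`. -/
def l2Form (L : E →ₗ[ℂ] α → ℂ) (hL : ∀ u, MemLp (L u) 2 μ) : E →ₗ⋆[ℂ] E →ₗ[ℂ] ℂ :=
  LinearMap.mk₂'ₛₗ (starRingEnd ℂ) (RingHom.id ℂ) (fun u v ↦ inner ℂ (l2Map L hL u) (l2Map L hL v))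
    (fun _ _ _ ↦ by simp only [map_add, inner_add_left])
    (fun _ _ _ ↦ by simp only [map_smul, inner_smul_left, smul_eq_mul])
    (fun _ _ _ ↦ by simp only [map_add, inner_add_right])
    (fun _ _ _ ↦ by simp only [map_smul, inner_smul_right, smul_eq_mul, RingHom.id_apply])

variable {L : E →ₗ[ℂ] α → ℂ} {hL : ∀ u, MemLp (L u) 2 μ}

lemma l2Form_isSymm : (l2Form L hL).IsSymm :=
  ⟨fun u v ↦ inner_conj_symm (l2Map L hL v) (l2Map L hL u)⟩

lemma l2Form_apply_self (u : E) : l2Form L hL u u = ∫ p, ‖L u p‖ ^ 2 ∂μ := by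
  rw [← integral_complex_ofReal]
  refine (L2.inner_def _ _).trans (integral_congr_ae ?_)
  filter_upwards [(hL u).coeFn_toLp] with p hp
  simp only [l2Map, LinearMap.coe_mk, AddHom.coe_mk, hp, inner_self_eq_norm_sq_to_K,
    Complex.coe_algebraMap, Complex.ofReal_pow]

end L2Form

section DirichletForm

variable {Ω : Set (ℝ × ℝ)} {t₀ b₀ lam : ℝ} {u : ℝ × ℝ → ℂ}

/-- The space `C₀^∞(Ω)` of test functions, as a complex vector space. -/
def testSubmodule (Ω : Set (ℝ × ℝ)) : Submodule ℂ (ℝ × ℝ → ℂ) where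
  carrier := {w | IsTestOn Ω w}
  zero_mem' := ⟨contDiff_const, HasCompactSupport.zero, by simp [tsupport]⟩
  add_mem' {u v} hu hv := ⟨hu.1.add hv.1, hu.2.1.add hv.2.1,
    (tsupport_add u v).trans (Set.union_subset hu.2.2 hv.2.2)⟩
  smul_mem' c u hu := ⟨contDiff_const.smul hu.1, hu.2.1.smul_left (f := fun _ ↦ c),
    (tsupport_smul_subset_right (fun _ ↦ c) u).trans hu.2.2⟩

lemma IsTestOn.differentiable (hu : IsTestOn Ω u) : Differentiable ℝ u :=
  hu.1.differentiable (by simp)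

lemma IsTestOn.continuous_fderiv (hu : IsTestOn Ω u) : Continuous (fderiv ℝ u) :=
  hu.1.continuous_fderiv (by simp)

lemma continuous_Azero (t₀ b₀ : ℝ) : Continuous (Azero t₀ b₀) := by
  unfold Azero
  fun_prop

/-- The magnetic derivative `-i∂ₓ - A₁⁰`. -/
def magneticDX (t₀ b₀ : ℝ) (u : ℝ × ℝ → ℂ) (p : ℝ × ℝ) : ℂ :=
  -Complex.I * dX u p - (Azero t₀ b₀ p : ℂ) * u p

lemma IsTestOn.memLp (hu : IsTestOn Ω u) : MemLp u 2 (volume.restrict Ω) :=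
  hu.1.continuous.memLp_of_hasCompactSupport hu.2.1

lemma IsTestOn.continuous_dX (hu : IsTestOn Ω u) : Continuous (dX u) :=
  hu.continuous_fderiv.clm_apply continuous_const

lemma IsTestOn.continuous_dY (hu : IsTestOn Ω u) : Continuous (dY u) :=
  hu.continuous_fderiv.clm_apply continuous_const

lemma IsTestOn.memLp_dX (hu : IsTestOn Ω u) : MemLp (dX u) 2 (volume.restrict Ω) :=
  hu.continuous_dX.memLp_of_hasCompactSupport (hu.2.1.fderiv_apply ℝ (1, 0))

lemma IsTestOn.memLp_dY (hu : IsTestOn Ω u) : MemLp (dY u) 2 (volume.restrict Ω) :=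
  hu.continuous_dY.memLp_of_hasCompactSupport (hu.2.1.fderiv_apply ℝ (0, 1))

lemma IsTestOn.memLp_magneticDX (hu : IsTestOn Ω u) :
    MemLp (magneticDX t₀ b₀ u) 2 (volume.restrict Ω) := by
  have hcont : Continuous (magneticDX t₀ b₀ u) :=
    (continuous_const.mul hu.continuous_dX).sub
      ((Complex.continuous_ofReal.comp (continuous_Azero t₀ b₀)).mul hu.1.continuous)
  exact hcont.memLp_of_hasCompactSupport
    (((hu.2.1.fderiv_apply ℝ (1, 0)).mul_left).sub hu.2.1.mul_left)

lemma IsTestOn.setIntegral_density (hu : IsTestOn Ω u) (κ v : ℝ) :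
    ∫ p in Ω, (κ * ‖magneticDX t₀ b₀ u p‖ ^ 2 + ‖dY u p‖ ^ 2 + v * ‖u p‖ ^ 2) =
      κ * (∫ p in Ω, ‖magneticDX t₀ b₀ u p‖ ^ 2) + (∫ p in Ω, ‖dY u p‖ ^ 2) +
        v * ∫ p in Ω, ‖u p‖ ^ 2 := by
  have hsq {f : ℝ × ℝ → ℂ} (hf : MemLp f 2 (volume.restrict Ω)) :
      Integrable (fun p ↦ ‖f p‖ ^ 2) (volume.restrict Ω) := hf.integrable_norm_pow two_ne_zero
  have hx := (hsq (hu.memLp_magneticDX (t₀ := t₀) (b₀ := b₀))).const_mul κ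
  rw [integral_add (hx.fun_add (hsq hu.memLp_dY)) ((hsq hu.memLp).const_mul v),
    integral_add hx (hsq hu.memLp_dY), integral_const_mul, integral_const_mul]

/-- The `t`-derivative on test functions, as a linear map. -/
def dYLinear (Ω : Set (ℝ × ℝ)) : testSubmodule Ω →ₗ[ℂ] ℝ × ℝ → ℂ where
  toFun u := dY u
  map_add' u v := by
    ext p
    simp [dY, fderiv_add (u.2.differentiable p) (v.2.differentiable p)]
  map_smul' c u := by
    ext p
    simp [dY, fderiv_const_smul (u.2.differentiable p)]

/-- The magnetic derivative on test functions, as a linear map. -/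
def magneticDXLinear (Ω : Set (ℝ × ℝ)) (t₀ b₀ : ℝ) : testSubmodule Ω →ₗ[ℂ] ℝ × ℝ → ℂ where
  toFun u := magneticDX t₀ b₀ u
  map_add' u v := by
    ext p
    simp only [magneticDX, dX, Submodule.coe_add, Pi.add_apply,
      fderiv_add (u.2.differentiable p) (v.2.differentiable p), add_apply]
    ring
  map_smul' c u := by
    ext p
    simp only [magneticDX, dX, Submodule.coe_smul, Pi.smul_apply, smul_eq_mul, RingHom.id_apply,
      fderiv_const_smul (u.2.differentiable p), smul_apply]
    ring

/-- The Hermitian form on `C₀^∞(Ω)` whose quadratic form is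
`∫_Ω (e^{2t₀} |(-i∂ₓ - A₁⁰)u|² + |∂ₜu|² + (1/4 - lam) |u|²)`. -/
def shiftedForm (Ω : Set (ℝ × ℝ)) (t₀ b₀ lam : ℝ) :
    testSubmodule Ω →ₗ⋆[ℂ] testSubmodule Ω →ₗ[ℂ] ℂ :=
  ((rexp (2 * t₀) : ℝ) : ℂ) •
      l2Form (μ := volume.restrict Ω) (magneticDXLinear Ω t₀ b₀) (fun u ↦ u.2.memLp_magneticDX) +
    l2Form (μ := volume.restrict Ω) (dYLinear Ω) (fun u ↦ u.2.memLp_dY) +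
    ((1 / 4 - lam : ℝ) : ℂ) •
      l2Form (μ := volume.restrict Ω) (testSubmodule Ω).subtype (fun u ↦ u.2.memLp)

lemma isSymm_ofReal_smul {E : Type*} [AddCommMonoid E] [Module ℂ E] {B : E →ₗ⋆[ℂ] E →ₗ[ℂ] ℂ}
    (hB : B.IsSymm) (r : ℝ) : ((r : ℂ) • B).IsSymm :=
  ⟨fun u v ↦ by simp [hB.eq u v]⟩

lemma shiftedForm_isSymm : (shiftedForm Ω t₀ b₀ lam).IsSymm :=
  ((isSymm_ofReal_smul l2Form_isSymm _).add l2Form_isSymm).add (isSymm_ofReal_smul l2Form_isSymm _)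

lemma re_shiftedForm_apply_self (u : testSubmodule Ω) :
    RCLike.re (shiftedForm Ω t₀ b₀ lam u u) =
      rexp (2 * t₀) * (∫ p in Ω, ‖magneticDX t₀ b₀ u p‖ ^ 2) + (∫ p in Ω, ‖dY u p‖ ^ 2) +
        (1 / 4 - lam) * ∫ p in Ω, ‖(u : ℝ × ℝ → ℂ) p‖ ^ 2 := by
  have hx := l2Form_apply_self (μ := volume.restrict Ω) (L := magneticDXLinear Ω t₀ b₀)
    (hL := fun u ↦ u.2.memLp_magneticDX) u
  have hy := l2Form_apply_self (μ := volume.restrict Ω) (L := dYLinear Ω)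
    (hL := fun u ↦ u.2.memLp_dY) u
  have hu := l2Form_apply_self (μ := volume.restrict Ω) (L := (testSubmodule Ω).subtype)
    (hL := fun u ↦ u.2.memLp) u
  simp only [shiftedForm, LinearMap.add_apply, LinearMap.smul_apply, hx, hy, hu, smul_eq_mul,
    ← Complex.ofReal_mul, ← Complex.ofReal_add, RCLike.re_eq_complex_re, Complex.ofReal_re]
  rfl

end DirichletForm

section CountingFunction

variable {x₀ t₀ a ε₀ b₀ lam : ℝ}

lemma re_shiftedForm_Krect (u : testSubmodule (Krect x₀ t₀ a ε₀)) :
    RCLike.re (shiftedForm (Krect x₀ t₀ a ε₀) t₀ b₀ lam u u) =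
      qK0 x₀ t₀ a ε₀ b₀ u - lam * ∫ p in Krect x₀ t₀ a ε₀, ‖(u : ℝ × ℝ → ℂ) p‖ ^ 2 := by
  have hq : qK0 x₀ t₀ a ε₀ b₀ u = ∫ p in Krect x₀ t₀ a ε₀,
      (rexp (2 * t₀) * ‖magneticDX t₀ b₀ u p‖ ^ 2 + ‖dY u p‖ ^ 2 +
        1 / 4 * ‖(u : ℝ × ℝ → ℂ) p‖ ^ 2) := rfl
  rw [re_shiftedForm_apply_self, hq, u.2.setIntegral_density]
  ring

lemma finrank_le_NK0 {n : ℕ} (hn : ∀ V : Submodule ℂ (testSubmodule (Krect x₀ t₀ a ε₀)),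
      IsNegDefOn (shiftedForm (Krect x₀ t₀ a ε₀) t₀ b₀ lam) V → Module.finrank ℂ V ≤ n)
    {W : Submodule ℂ (testSubmodule (Krect x₀ t₀ a ε₀))}
    (hW : IsNegDefOn (shiftedForm (Krect x₀ t₀ a ε₀) t₀ b₀ lam) W) :
    Module.finrank ℂ W ≤ NK0 x₀ t₀ a ε₀ b₀ lam := by
  refine le_csSup ⟨n, ?_⟩
    ⟨W.map (testSubmodule _).subtype, ?_, Submodule.finrank_map_subtype_eq _ W, ?_⟩
  · rintro _ ⟨V, hVdom, rfl, hVneg⟩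
    have hVD : V ≤ testSubmodule (Krect x₀ t₀ a ε₀) := hVdom
    have hcomap := hn (V.comap (testSubmodule _).subtype) fun u hu hu0 ↦ by
      rw [re_shiftedForm_Krect]
      exact sub_neg.2 (hVneg u hu fun h ↦ hu0 (Subtype.ext h))
    rwa [← Submodule.finrank_map_subtype_eq, Submodule.map_comap_subtype, inf_eq_right.2 hVD]
      at hcomap
  · exact Submodule.map_subtype_le _ W
  · rintro _ ⟨u, hu, rfl⟩ hu0
    have hneg := hW u hu fun h ↦ hu0 (by simp [h])
    rw [re_shiftedForm_Krect] at hneg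
    exact sub_neg.1 hneg

end CountingFunction

section Poincare

open scoped InnerProductSpace

lemma integrableOn_of_continuous_of_isBounded {X F : Type*} [MetricSpace X] [ProperSpace X]
    [MeasurableSpace X] [OpensMeasurableSpace X] {μ : Measure X} [IsFiniteMeasureOnCompacts μ]
    [NormedAddCommGroup F] {f : X → F} (hf : Continuous f) {s : Set X}
    (hs : Bornology.IsBounded s) : IntegrableOn f s μ :=
  (hf.continuousOn.integrableOn_compact hs.isCompact_closure).mono_set subset_closure

lemma memLp_two_restrict_of_continuous_of_isBounded {X F : Type*} [MetricSpace X]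
    [ProperSpace X] [MeasurableSpace X] [OpensMeasurableSpace X] {μ : Measure X}
    [IsFiniteMeasureOnCompacts μ] [NormedAddCommGroup F] [SecondCountableTopologyEither X F]
    {f : X → F} (hf : Continuous f) {s : Set X}
    (hs : Bornology.IsBounded s) : MemLp f 2 (μ.restrict s) :=
  (memLp_two_iff_integrable_sq_norm hf.aestronglyMeasurable).2
    (integrableOn_of_continuous_of_isBounded (hf.norm.pow 2) hs)

lemma sq_integral_le_measureReal_mul_integral_sq {α : Type*} [MeasurableSpace α] {μ : Measure α}
    [IsFiniteMeasure μ] {g : α → ℝ} (hg : MemLp g 2 μ) :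
    (∫ x, g x ∂μ) ^ 2 ≤ μ.real Set.univ * ∫ x, g x ^ 2 ∂μ := by
  have hg1 : Integrable g μ := hg.integrable one_le_two
  have hexpand : ∀ s : ℝ, ∫ x, (g x - s) ^ 2 ∂μ =
      μ.real Set.univ * (s * s) + -2 * (∫ x, g x ∂μ) * s + ∫ x, g x ^ 2 ∂μ := by
    intro s
    have h : ∀ x, (g x - s) ^ 2 = g x ^ 2 + (-2 * s) * g x + s * s := fun x ↦ by ring
    simp_rw [h]
    rw [integral_add (hg.integrable_sq.fun_add (hg1.const_mul _)) (integrable_const _),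
      integral_add hg.integrable_sq (hg1.const_mul _), integral_const_mul, integral_const,
      smul_eq_mul]
    ring
  have hdiscrim := discrim_le_zero fun s ↦ hexpand s ▸ integral_nonneg fun x ↦ sq_nonneg (g x - s)
  rw [discrim] at hdiscrim
  linarith

lemma integral_norm_sub_sq_of_integral_eq_zero {α F : Type*} [MeasurableSpace α] {μ : Measure α}
    [IsFiniteMeasure μ] [NormedAddCommGroup F] [InnerProductSpace ℝ F] [CompleteSpace F]
    {f : α → F} (hf : MemLp f 2 μ) (h0 : ∫ q, f q ∂μ = 0) (v : F) :
    ∫ q, ‖v - f q‖ ^ 2 ∂μ = μ.real Set.univ * ‖v‖ ^ 2 + ∫ q, ‖f q‖ ^ 2 ∂μ := by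
  have hinner : Integrable (fun q ↦ 2 * ⟪v, f q⟫_ℝ) μ :=
    ((hf.integrable one_le_two).const_inner v).const_mul 2
  have hsub : Integrable (fun q ↦ ‖v‖ ^ 2 - 2 * ⟪v, f q⟫_ℝ) μ := (integrable_const _).sub hinner
  simp_rw [norm_sub_sq_real]
  rw [integral_add hsub (hf.integrable_norm_pow two_ne_zero),
    integral_sub (integrable_const _) hinner, integral_const_mul,
    integral_inner (hf.integrable one_le_two), h0, inner_zero_right, integral_const, smul_eq_mul,
    mul_zero, sub_zero]

lemma two_mul_integral_norm_sq_le {α F : Type*} [MeasurableSpace α] {μ : Measure α}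
    [IsFiniteMeasure μ] [NormedAddCommGroup F] [InnerProductSpace ℝ F] [CompleteSpace F]
    {f : α → F} (hf : MemLp f 2 μ) (h0 : ∫ q, f q ∂μ = 0) {g₁ g₂ : α → ℝ} (hg₁ : Integrable g₁ μ)
    (hg₂ : Integrable g₂ μ) (h : ∀ᵐ p ∂μ, ∀ᵐ q ∂μ, ‖f p - f q‖ ^ 2 ≤ g₁ p + g₂ q) :
    2 * ∫ p, ‖f p‖ ^ 2 ∂μ ≤ (∫ p, g₁ p ∂μ) + ∫ p, g₂ p ∂μ := by
  rcases eq_zero_or_neZero μ with rfl | _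
  · simp
  have hsq : Integrable (fun p ↦ ‖f p‖ ^ 2) μ := hf.integrable_norm_pow two_ne_zero
  have hpoint : ∀ᵐ p ∂μ, μ.real Set.univ * ‖f p‖ ^ 2 + ∫ q, ‖f q‖ ^ 2 ∂μ ≤
      μ.real Set.univ * g₁ p + ∫ q, g₂ q ∂μ := by
    filter_upwards [h] with p hp
    have hdiff : MemLp (fun q ↦ f p - f q) 2 μ := (memLp_const _).sub hf
    have hmono := integral_mono_ae (hdiff.integrable_norm_pow two_ne_zero)
      ((integrable_const (g₁ p)).fun_add hg₂) hp
    rwa [integral_norm_sub_sq_of_integral_eq_zero hf h0, integral_add (integrable_const _) hg₂,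
      integral_const, smul_eq_mul] at hmono
  have hmono := integral_mono_ae ((hsq.const_mul _).fun_add (integrable_const _))
    ((hg₁.const_mul _).fun_add (integrable_const _)) hpoint
  rw [integral_add (hsq.const_mul _) (integrable_const _),
    integral_add (hg₁.const_mul _) (integrable_const _), integral_const_mul, integral_const_mul,
    integral_const, integral_const, smul_eq_mul, smul_eq_mul, ← mul_add, ← mul_add] at hmono
  linarith [le_of_mul_le_mul_left hmono (measureReal_univ_pos (μ := μ))]

lemma norm_sub_sq_le_mul_integral_norm_deriv_sq {F : Type*} [NormedAddCommGroup F]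
    [NormedSpace ℝ F] [CompleteSpace F] {f f' : ℝ → F} (hf : ∀ x, HasDerivAt f (f' x) x)
    (hf' : Continuous f') {a h x y : ℝ} (hx : x ∈ Set.Ioc a (a + h)) (hy : y ∈ Set.Ioc a (a + h)) :
    ‖f x - f y‖ ^ 2 ≤ h * ∫ z in Set.Ioc a (a + h), ‖f' z‖ ^ 2 := by
  have hbdd : Bornology.IsBounded (Set.Ioc a (a + h)) := Metric.isBounded_Ioc a (a + h)
  have hsub : Set.uIoc y x ⊆ Set.Ioc a (a + h) := fun z hz ↦
    ⟨(lt_min hy.1 hx.1).trans hz.1, hz.2.trans (max_le hy.2 hx.2)⟩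
  have hftc : ‖f x - f y‖ ≤ ∫ z in Set.Ioc a (a + h), ‖f' z‖ := by
    rw [← intervalIntegral.integral_eq_sub_of_hasDerivAt (fun z _ ↦ hf z)
      (hf'.intervalIntegrable y x)]
    exact intervalIntegral.norm_integral_le_integral_norm_uIoc.trans
      (setIntegral_mono_set (integrableOn_of_continuous_of_isBounded hf'.norm hbdd)
        (ae_of_all _ fun z ↦ norm_nonneg _) hsub.eventuallyLE)
  calc ‖f x - f y‖ ^ 2 ≤ (∫ z in Set.Ioc a (a + h), ‖f' z‖) ^ 2 := by gcongr
    _ ≤ _ := sq_integral_le_measureReal_mul_integral_sq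
      (memLp_two_restrict_of_continuous_of_isBounded hf'.norm hbdd)
    _ = h * ∫ z in Set.Ioc a (a + h), ‖f' z‖ ^ 2 := by
      rw [measureReal_restrict_apply_univ, Real.volume_real_Ioc_of_le (hx.1.le.trans hx.2)]
      ring

lemma hasDerivAt_slice_fst {u : ℝ × ℝ → ℂ} (hu : Differentiable ℝ u) (x t : ℝ) :
    HasDerivAt (fun y ↦ u (y, t)) (dX u (x, t)) x :=
  (hu (x, t)).hasFDerivAt.comp_hasDerivAt x ((hasDerivAt_id x).prodMk (hasDerivAt_const x t))

lemma hasDerivAt_slice_snd {u : ℝ × ℝ → ℂ} (hu : Differentiable ℝ u) (x t : ℝ) :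
    HasDerivAt (fun s ↦ u (x, s)) (dY u (x, t)) t :=
  (hu (x, t)).hasFDerivAt.comp_hasDerivAt t ((hasDerivAt_const t x).prodMk (hasDerivAt_id t))

variable {u : ℝ × ℝ → ℂ} {a b h : ℝ}

lemma norm_sub_sq_le_on_square (hu : ContDiff ℝ 1 u) {p q : ℝ × ℝ}
    (hp : p ∈ Set.Ioc a (a + h) ×ˢ Set.Ioc b (b + h))
    (hq : q ∈ Set.Ioc a (a + h) ×ˢ Set.Ioc b (b + h)) :
    ‖u p - u q‖ ^ 2 ≤ 2 * (h * ∫ x in Set.Ioc a (a + h), ‖dX u (x, p.2)‖ ^ 2) +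
      2 * (h * ∫ t in Set.Ioc b (b + h), ‖dY u (q.1, t)‖ ^ 2) := by
  have hdiff : Differentiable ℝ u := hu.differentiable one_ne_zero
  have hcont (v : ℝ × ℝ) : Continuous fun r ↦ fderiv ℝ u r v :=
    (hu.continuous_fderiv one_ne_zero).clm_apply continuous_const
  have hx := norm_sub_sq_le_mul_integral_norm_deriv_sq (fun x ↦ hasDerivAt_slice_fst hdiff x p.2)
    ((hcont (1, 0)).comp (.prodMk_left p.2)) hp.1 hq.1
  have ht := norm_sub_sq_le_mul_integral_norm_deriv_sq (fun t ↦ hasDerivAt_slice_snd hdiff q.1 t)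
    ((hcont (0, 1)).comp (.prodMk_right q.1)) hp.2 hq.2
  have htri : ‖u p - u q‖ ≤ ‖u (p.1, p.2) - u (q.1, p.2)‖ + ‖u (q.1, p.2) - u (q.1, q.2)‖ :=
    norm_sub_le_norm_sub_add_norm_sub _ _ _
  calc ‖u p - u q‖ ^ 2 ≤ _ := pow_le_pow_left₀ (norm_nonneg _) htri 2
    _ ≤ _ := add_sq_le
    _ ≤ _ := by linarith

lemma integral_prod_integral_slice_fst {α β : Type*} [MeasurableSpace α] [MeasurableSpace β]
    {μ : Measure α} {ν : Measure β} [IsFiniteMeasure μ] [SFinite ν] {f : α × β → ℝ}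
    (hf : Integrable f (μ.prod ν)) :
    Integrable (fun p : α × β ↦ ∫ x, f (x, p.2) ∂μ) (μ.prod ν) ∧
      ∫ p : α × β, (∫ x, f (x, p.2) ∂μ) ∂(μ.prod ν) = μ.real Set.univ * ∫ p, f p ∂(μ.prod ν) :=
  ⟨hf.integral_prod_right.comp_snd μ,
    by rw [integral_fun_snd fun t ↦ ∫ x, f (x, t) ∂μ, smul_eq_mul, integral_prod_symm f hf]⟩

lemma integral_prod_integral_slice_snd {α β : Type*} [MeasurableSpace α] [MeasurableSpace β]
    {μ : Measure α} {ν : Measure β} [SFinite μ] [IsFiniteMeasure ν] {f : α × β → ℝ}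
    (hf : Integrable f (μ.prod ν)) :
    Integrable (fun p : α × β ↦ ∫ t, f (p.1, t) ∂ν) (μ.prod ν) ∧
      ∫ p : α × β, (∫ t, f (p.1, t) ∂ν) ∂(μ.prod ν) = ν.real Set.univ * ∫ p, f p ∂(μ.prod ν) :=
  ⟨hf.integral_prod_left.comp_fst ν,
    by rw [integral_fun_fst fun x ↦ ∫ t, f (x, t) ∂ν, smul_eq_mul, integral_prod f hf]⟩

-- Integrate `‖u p - u q‖²` over all pairs of points `p, q` of the square.
lemma integral_norm_sq_le_of_integral_eq_zero (hu : ContDiff ℝ 1 u) (hh : 0 < h)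
    (h0 : ∫ p in Set.Ioc a (a + h) ×ˢ Set.Ioc b (b + h), u p = 0) :
    ∫ p in Set.Ioc a (a + h) ×ˢ Set.Ioc b (b + h), ‖u p‖ ^ 2 ≤
      h ^ 2 * ((∫ p in Set.Ioc a (a + h) ×ˢ Set.Ioc b (b + h), ‖dX u p‖ ^ 2) +
        ∫ p in Set.Ioc a (a + h) ×ˢ Set.Ioc b (b + h), ‖dY u p‖ ^ 2) := by
  have hbdd : Bornology.IsBounded (Set.Ioc a (a + h) ×ˢ Set.Ioc b (b + h)) :=
    (Metric.isBounded_Ioc _ _).prod (Metric.isBounded_Ioc _ _)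
  have hmeas : MeasurableSet (Set.Ioc a (a + h) ×ˢ Set.Ioc b (b + h)) :=
    measurableSet_Ioc.prod measurableSet_Ioc
  have hpair := ae_restrict_of_forall_mem (μ := (volume : Measure (ℝ × ℝ))) hmeas
    fun p hp ↦ ae_restrict_of_forall_mem (μ := (volume : Measure (ℝ × ℝ))) hmeas
      fun q hq ↦ norm_sub_sq_le_on_square hu hp hq
  have hLp := memLp_two_restrict_of_continuous_of_isBounded (μ := volume) hu.continuous hbdd
  have hsq (v : ℝ × ℝ) : IntegrableOn (fun p ↦ ‖fderiv ℝ u p v‖ ^ 2)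
      (Set.Ioc a (a + h) ×ˢ Set.Ioc b (b + h)) :=
    integrableOn_of_continuous_of_isBounded
      (((hu.continuous_fderiv one_ne_zero).clm_apply continuous_const).norm.pow 2) hbdd
  have hvol (c : ℝ) : (volume.restrict (Set.Ioc c (c + h))).real Set.univ = h := by simp [hh.le]
  simp only [IntegrableOn, Measure.volume_eq_prod, ← Measure.prod_restrict] at hpair hLp hsq h0 ⊢
  obtain ⟨hXint, hX⟩ := integral_prod_integral_slice_fst (hsq (1, 0))
  obtain ⟨hYint, hY⟩ := integral_prod_integral_slice_snd (hsq (0, 1))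
  have hmain := two_mul_integral_norm_sq_le hLp h0 ((hXint.const_mul h).const_mul 2)
    ((hYint.const_mul h).const_mul 2) hpair
  simp only [integral_const_mul, hX, hY, hvol] at hmain
  simp only [dX, dY]
  linarith

end Poincare

section Discreteness

variable {Ω : Set (ℝ × ℝ)} {t₀ b₀ lam h : ℝ} {u : ℝ × ℝ → ℂ}

/-- The half-open squares of side `h` tiling the plane. -/
def squareCell (h : ℝ) (i : ℤ × ℤ) : Set (ℝ × ℝ) :=
  Set.Ioc (i.1 * h) (i.1 * h + h) ×ˢ Set.Ioc (i.2 * h) (i.2 * h + h)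

lemma measurableSet_squareCell (h : ℝ) (i : ℤ × ℤ) : MeasurableSet (squareCell h i) :=
  measurableSet_Ioc.prod measurableSet_Ioc

lemma isBounded_squareCell (h : ℝ) (i : ℤ × ℤ) : Bornology.IsBounded (squareCell h i) :=
  (Metric.isBounded_Ioc _ _).prod (Metric.isBounded_Ioc _ _)

lemma mem_Ioc_int_mul_iff (hh : 0 < h) {i : ℤ} {x : ℝ} :
    x ∈ Set.Ioc (i * h) (i * h + h) ↔ ⌈x / h⌉ = i + 1 := by
  rw [Int.ceil_eq_iff, lt_div_iff₀ hh, div_le_iff₀ hh]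
  push_cast
  rw [add_sub_cancel_right, add_one_mul]
  rfl

lemma pairwise_disjoint_squareCell (hh : 0 < h) :
    Pairwise (Function.onFun Disjoint (squareCell h)) := by
  intro i j hij
  refine Set.disjoint_left.2 fun p hpi hpj ↦ hij (Prod.ext ?_ ?_)
  · linarith [(mem_Ioc_int_mul_iff hh).1 hpi.1, (mem_Ioc_int_mul_iff hh).1 hpj.1]
  · linarith [(mem_Ioc_int_mul_iff hh).1 hpi.2, (mem_Ioc_int_mul_iff hh).1 hpj.2]

lemma exists_finset_subset_biUnion_squareCell (hΩ : Bornology.IsBounded Ω) (hh : 0 < h) :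
    ∃ S : Finset (ℤ × ℤ), Ω ⊆ ⋃ i ∈ S, squareCell h i := by
  obtain ⟨R, hR⟩ := hΩ.subset_closedBall 0
  have hceil : ∀ x : ℝ, |x| ≤ R → ⌈x / h⌉ - 1 ∈ Finset.Icc (⌈-R / h⌉ - 1) (⌈R / h⌉ - 1) := by
    intro x hx
    rw [Finset.mem_Icc]
    have := abs_le.1 hx
    constructor <;> gcongr <;> linarith
  refine ⟨Finset.Icc (⌈-R / h⌉ - 1) (⌈R / h⌉ - 1) ×ˢ Finset.Icc (⌈-R / h⌉ - 1) (⌈R / h⌉ - 1),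
    fun p hp ↦ ?_⟩
  have hpR : ‖p‖ ≤ R := mem_closedBall_zero_iff.1 (hR hp)
  exact Set.mem_biUnion (x := (⌈p.1 / h⌉ - 1, ⌈p.2 / h⌉ - 1))
    (Finset.mk_mem_product (hceil _ ((norm_fst_le p).trans hpR))
      (hceil _ ((norm_snd_le p).trans hpR)))
    ⟨(mem_Ioc_int_mul_iff hh).2 (by ring), (mem_Ioc_int_mul_iff hh).2 (by ring)⟩

lemma setIntegral_norm_sq_eq_sum_squareCell (hh : 0 < h) {S : Finset (ℤ × ℤ)}
    (hS : Ω ⊆ ⋃ i ∈ S, squareCell h i) {f : ℝ × ℝ → ℂ} (hf : Continuous f)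
    (hf0 : ∀ p ∉ Ω, f p = 0) :
    ∫ p in Ω, ‖f p‖ ^ 2 = ∑ i ∈ S, ∫ p in squareCell h i, ‖f p‖ ^ 2 := by
  have hcont : Continuous fun p ↦ ‖f p‖ ^ 2 := hf.norm.pow 2
  have hsq0 : ∀ p ∉ Ω, ‖f p‖ ^ 2 = 0 := fun p hp ↦ by simp [hf0 p hp]
  rw [← integral_biUnion_finset S (fun i _ ↦ measurableSet_squareCell h i)
      ((pairwise_disjoint_squareCell hh).set_pairwise _)
      fun i _ ↦ integrableOn_of_continuous_of_isBounded hcont (isBounded_squareCell h i),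
    setIntegral_eq_integral_of_forall_compl_eq_zero hsq0,
    setIntegral_eq_integral_of_forall_compl_eq_zero fun p hp ↦ hsq0 p fun hpΩ ↦ hp (hS hpΩ)]

lemma IsTestOn.eq_zero_of_notMem (hu : IsTestOn Ω u) {p : ℝ × ℝ} (hp : p ∉ Ω) : u p = 0 :=
  image_eq_zero_of_notMem_tsupport fun h ↦ hp (hu.2.2 h)

lemma IsTestOn.fderiv_eq_zero_of_notMem (hu : IsTestOn Ω u) {p : ℝ × ℝ} (hp : p ∉ Ω) :
    fderiv ℝ u p = 0 :=
  image_eq_zero_of_notMem_tsupport fun h ↦ hp (hu.2.2 (tsupport_fderiv_subset ℝ h))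

/-- The integral over a square, as a linear functional on test functions. -/
def cellIntegral (Ω : Set (ℝ × ℝ)) (h : ℝ) (i : ℤ × ℤ) : testSubmodule Ω →ₗ[ℂ] ℂ where
  toFun u := ∫ p in squareCell h i, (u : ℝ × ℝ → ℂ) p
  map_add' u v := integral_add
    (integrableOn_of_continuous_of_isBounded u.2.1.continuous (isBounded_squareCell h i))
    (integrableOn_of_continuous_of_isBounded v.2.1.continuous (isBounded_squareCell h i))
  map_smul' c _ := integral_smul c _

lemma integral_norm_sq_le_of_cellIntegral_eq_zero (hh : 0 < h) {S : Finset (ℤ × ℤ)}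
    (hS : Ω ⊆ ⋃ i ∈ S, squareCell h i) (u : testSubmodule Ω)
    (hu : ∀ i ∈ S, cellIntegral Ω h i u = 0) :
    ∫ p in Ω, ‖(u : ℝ × ℝ → ℂ) p‖ ^ 2 ≤
      h ^ 2 * ((∫ p in Ω, ‖dX u p‖ ^ 2) + ∫ p in Ω, ‖dY u p‖ ^ 2) := by
  rw [setIntegral_norm_sq_eq_sum_squareCell hh hS u.2.1.continuous
      fun p hp ↦ u.2.eq_zero_of_notMem hp,
    setIntegral_norm_sq_eq_sum_squareCell hh hS u.2.continuous_dX
      fun p hp ↦ by rw [dX, u.2.fderiv_eq_zero_of_notMem hp, zero_apply],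
    setIntegral_norm_sq_eq_sum_squareCell hh hS u.2.continuous_dY
      fun p hp ↦ by rw [dY, u.2.fderiv_eq_zero_of_notMem hp, zero_apply],
    ← Finset.sum_add_distrib, Finset.mul_sum]
  exact Finset.sum_le_sum fun i hi ↦ integral_norm_sq_le_of_integral_eq_zero
    (u.2.1.of_le (by exact_mod_cast le_top)) hh (hu i hi)

lemma exists_abs_Azero_le (hΩ : Bornology.IsBounded Ω) (t₀ b₀ : ℝ) :
    ∃ M, ∀ p ∈ Ω, |Azero t₀ b₀ p| ≤ M := by
  obtain ⟨M, hM⟩ := hΩ.isCompact_closure.exists_bound_of_continuousOn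
    (continuous_Azero t₀ b₀).continuousOn
  exact ⟨M, fun p hp ↦ hM p (subset_closure hp)⟩

lemma norm_dX_sq_le (p : ℝ × ℝ) :
    ‖dX u p‖ ^ 2 ≤ 2 * ‖magneticDX t₀ b₀ u p‖ ^ 2 + 2 * (|Azero t₀ b₀ p| ^ 2 * ‖u p‖ ^ 2) := by
  have hsplit : -Complex.I * dX u p = magneticDX t₀ b₀ u p + (Azero t₀ b₀ p : ℂ) * u p := by
    rw [magneticDX, sub_add_cancel]
  have hnorm : ‖dX u p‖ ≤ ‖magneticDX t₀ b₀ u p‖ + |Azero t₀ b₀ p| * ‖u p‖ := by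
    simpa [← hsplit] using norm_add_le (magneticDX t₀ b₀ u p) ((Azero t₀ b₀ p : ℂ) * u p)
  calc ‖dX u p‖ ^ 2 ≤ _ := pow_le_pow_left₀ (norm_nonneg _) hnorm 2
    _ ≤ _ := add_sq_le
    _ = _ := by ring

lemma integral_norm_dX_sq_le {M : ℝ} (hΩ : MeasurableSet Ω) (hM : ∀ p ∈ Ω, |Azero t₀ b₀ p| ≤ M)
    (hu : IsTestOn Ω u) :
    ∫ p in Ω, ‖dX u p‖ ^ 2 ≤
      2 * (∫ p in Ω, ‖magneticDX t₀ b₀ u p‖ ^ 2) + 2 * M ^ 2 * ∫ p in Ω, ‖u p‖ ^ 2 := by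
  have hsq {f : ℝ × ℝ → ℂ} (hf : MemLp f 2 (volume.restrict Ω)) :
      Integrable (fun p ↦ ‖f p‖ ^ 2) (volume.restrict Ω) := hf.integrable_norm_pow two_ne_zero
  have hmag := (hsq (hu.memLp_magneticDX (t₀ := t₀) (b₀ := b₀))).const_mul 2
  have hpot := (hsq hu.memLp).const_mul (2 * M ^ 2)
  rw [← integral_const_mul, ← integral_const_mul, ← integral_add hmag hpot]
  refine setIntegral_mono_on (hsq hu.memLp_dX) (hmag.add hpot) hΩ fun p hp ↦ ?_
  refine (norm_dX_sq_le (t₀ := t₀) (b₀ := b₀) p).trans ?_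
  rw [mul_assoc 2 (M ^ 2)]
  gcongr
  exact hM p hp

lemma exists_re_shiftedForm_nonneg_of_cellIntegral_eq_zero (hΩ : Bornology.IsBounded Ω)
    (hΩm : MeasurableSet Ω) (t₀ b₀ lam : ℝ) :
    ∃ h > 0, ∀ S : Finset (ℤ × ℤ), Ω ⊆ ⋃ i ∈ S, squareCell h i → ∀ u : testSubmodule Ω,
      (∀ i ∈ S, cellIntegral Ω h i u = 0) → 0 ≤ RCLike.re (shiftedForm Ω t₀ b₀ lam u u) := by
  obtain ⟨M, hM⟩ := exists_abs_Azero_le hΩ t₀ b₀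
  set K : ℝ := 2 * rexp (-(2 * t₀)) + 1 with hK
  set D : ℝ := 2 * M ^ 2 + K * |lam| + 1 with hD
  have hD0 : 0 < D := by positivity
  refine ⟨√(1 / D), by positivity, fun S hS u hu ↦ ?_⟩
  have hpoincare := integral_norm_sq_le_of_cellIntegral_eq_zero (by positivity) hS u hu
  have hdX := integral_norm_dX_sq_le hΩm hM u.2
  rw [re_shiftedForm_apply_self]
  set U := ∫ p in Ω, ‖(u : ℝ × ℝ → ℂ) p‖ ^ 2
  set X := ∫ p in Ω, ‖magneticDX t₀ b₀ u p‖ ^ 2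
  set Y := ∫ p in Ω, ‖dY u p‖ ^ 2
  have hU : 0 ≤ U := integral_nonneg fun _ ↦ by positivity
  have hX : 0 ≤ X := integral_nonneg fun _ ↦ by positivity
  have hY : 0 ≤ Y := integral_nonneg fun _ ↦ by positivity
  have hexp : rexp (-(2 * t₀)) * rexp (2 * t₀) = 1 := by rw [← Real.exp_add]; simp
  have henergy : 2 * X + Y ≤ K * (rexp (2 * t₀) * X + Y) := by
    have : K * (rexp (2 * t₀) * X + Y) =
        2 * X * (rexp (-(2 * t₀)) * rexp (2 * t₀)) + Y +
          (rexp (2 * t₀) * X + 2 * rexp (-(2 * t₀)) * Y) := by rw [hK]; ring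
    rw [this, hexp, mul_one]
    linarith [show 0 ≤ rexp (2 * t₀) * X + 2 * rexp (-(2 * t₀)) * Y by positivity]
  rw [sq_sqrt (by positivity), one_div_mul_eq_div, le_div_iff₀ hD0] at hpoincare
  have hKlam : K * (lam * U) ≤ K * (rexp (2 * t₀) * X + Y) := by
    have : K * (lam * U) ≤ K * (|lam| * U) := by gcongr; exact le_abs_self lam
    rw [hD] at hpoincare
    linarith
  linarith [le_of_mul_le_mul_left hKlam (by positivity)]

theorem exists_finrank_le_of_isNegDefOn_shiftedForm (hΩ : Bornology.IsBounded Ω)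
    (hΩm : MeasurableSet Ω) (t₀ b₀ lam : ℝ) :
    ∃ n : ℕ, ∀ V : Submodule ℂ (testSubmodule Ω),
      IsNegDefOn (shiftedForm Ω t₀ b₀ lam) V → Module.finrank ℂ V ≤ n := by
  obtain ⟨h, hh, hnonneg⟩ :=
    exists_re_shiftedForm_nonneg_of_cellIntegral_eq_zero hΩ hΩm t₀ b₀ lam
  obtain ⟨S, hS⟩ := exists_finset_subset_biUnion_squareCell hΩ hh
  exact ⟨Fintype.card S, fun V hV ↦ hV.finrank_le_card (fun i : S ↦ cellIntegral Ω h i)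
    fun u hu ↦ hnonneg S hS u fun i hi ↦ hu ⟨i, hi⟩⟩

end Discreteness

section Cutoff

open scoped ContDiff

/-- A smooth cut-off supported in `(0, w)` whose squared translates by `ℤ l` sum to one (for
`w ≤ 2 l` at most two of them overlap, so it suffices to look at `[0, l]`), and whose squared
derivatives sum to at most `c`: the localization error in the IMS formula. -/
structure IsTilingCutoff (l w c : ℝ) (η : ℝ → ℝ) : Prop where
  contDiff : ContDiff ℝ ∞ η
  tsupport_subset : tsupport η ⊆ Set.Ioo 0 w
  sq_add_sq : ∀ x ∈ Set.Icc 0 l, η x ^ 2 + η (x + l) ^ 2 = 1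
  mul_deriv_add : ∀ x ∈ Set.Icc 0 l, η x * deriv η x + η (x + l) * deriv η (x + l) = 0
  deriv_sq_add_le : ∀ x ∈ Set.Icc 0 l, deriv η x ^ 2 + deriv η (x + l) ^ 2 ≤ c

/-- A smooth phase equal to `0` on `(-∞, 1/3]` and to `π / 2` on `[2/3, ∞)`. -/
def cutoffPhase (x : ℝ) : ℝ := π / 2 * Real.smoothTransition (3 * x - 1)

lemma contDiff_cutoffPhase : ContDiff ℝ ∞ cutoffPhase :=
  contDiff_const.mul (Real.smoothTransition.contDiff.comp (by fun_prop))

lemma cutoffPhase_of_le {x : ℝ} (hx : x ≤ 1 / 3) : cutoffPhase x = 0 := by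
  rw [cutoffPhase, Real.smoothTransition.zero_of_nonpos (by linarith), mul_zero]

lemma cutoffPhase_of_ge {x : ℝ} (hx : 2 / 3 ≤ x) : cutoffPhase x = π / 2 := by
  rw [cutoffPhase, Real.smoothTransition.one_of_one_le (by linarith), mul_one]

lemma exists_abs_deriv_cutoffPhase_le : ∃ C > 0, ∀ x, |deriv cutoffPhase x| ≤ C := by
  have hcont : Continuous (deriv cutoffPhase) := contDiff_cutoffPhase.continuous_deriv (by simp)
  obtain ⟨C, hC⟩ := (isCompact_Icc (a := (0 : ℝ)) (b := 1)).exists_bound_of_continuousOn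
    hcont.continuousOn
  refine ⟨|C| + 1, by positivity, fun x ↦ ?_⟩
  by_cases hx : x ∈ Set.Icc (0 : ℝ) 1
  · exact (hC x hx).trans (by linarith [le_abs_self C])
  have hderiv : deriv cutoffPhase x = 0 := by
    rcases lt_or_ge x 0 with hneg | hpos
    · have : cutoffPhase =ᶠ[nhds x] fun _ ↦ 0 := by
        filter_upwards [Iio_mem_nhds hneg] with y hy
        exact cutoffPhase_of_le (by linarith [Set.mem_Iio.1 hy])
      rw [this.deriv_eq, deriv_const]
    · have : cutoffPhase =ᶠ[nhds x] fun _ ↦ π / 2 := by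
        filter_upwards [Ioi_mem_nhds (not_le.1 fun h ↦ hx ⟨hpos, h⟩)] with y hy
        exact cutoffPhase_of_ge (by linarith [Set.mem_Ioi.1 hy])
      rw [this.deriv_eq, deriv_const]
  rw [hderiv, abs_zero]
  positivity

/-- The cut-off rising from `0` to `1` over `(0, δ)` and falling back to `0` over `(l, l + δ)`. -/
def tilingCutoff (l δ x : ℝ) : ℝ :=
  Real.sin (cutoffPhase (x / δ)) * Real.cos (cutoffPhase ((x - l) / δ))

variable {l δ : ℝ}

lemma tsupport_tilingCutoff_subset (hδ : 0 < δ) :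
    tsupport (tilingCutoff l δ) ⊆ Set.Ioo 0 (l + δ) := by
  have hsupp : Function.support (tilingCutoff l δ) ⊆ Set.Icc (δ / 3) (l + 2 * δ / 3) := by
    intro x hx
    by_contra hmem
    refine hx ?_
    rw [Set.mem_Icc, not_and_or, not_le, not_le] at hmem
    rcases hmem with hlt | hgt
    · rw [tilingCutoff, cutoffPhase_of_le (by rw [div_le_iff₀ hδ]; linarith), Real.sin_zero,
        zero_mul]
    · rw [tilingCutoff, cutoffPhase_of_ge (x := (x - l) / δ) (by rw [le_div_iff₀ hδ]; linarith),
        Real.cos_pi_div_two, mul_zero]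
  exact (closure_minimal hsupp isClosed_Icc).trans (Set.Icc_subset_Ioo (by linarith) (by linarith))

lemma tilingCutoff_eq_sin (hδ : 0 < δ) {x : ℝ} (hx : x < l + δ / 3) :
    tilingCutoff l δ x = Real.sin (cutoffPhase (x / δ)) := by
  rw [tilingCutoff, cutoffPhase_of_le (x := (x - l) / δ) (by rw [div_le_iff₀ hδ]; linarith),
    Real.cos_zero, mul_one]

lemma tilingCutoff_add_eq_cos (hδ : 0 < δ) (hδl : δ ≤ l) {x : ℝ} (hx : -δ / 3 < x) :
    tilingCutoff l δ (x + l) = Real.cos (cutoffPhase (x / δ)) := by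
  rw [tilingCutoff, cutoffPhase_of_ge (x := (x + l) / δ) (by rw [le_div_iff₀ hδ]; linarith),
    Real.sin_pi_div_two, one_mul, add_sub_cancel_right]

lemma hasDerivAt_cutoffPhase_div (δ x : ℝ) :
    HasDerivAt (fun y ↦ cutoffPhase (y / δ)) (deriv cutoffPhase (x / δ) / δ) x := by
  have hphase := (contDiff_cutoffPhase.differentiable (by simp) (x / δ)).hasDerivAt
  exact (hphase.comp x ((hasDerivAt_id' x).div_const δ)).congr_deriv (mul_one_div _ _)

lemma deriv_tilingCutoff (hδ : 0 < δ) {x : ℝ} (hx : x < l + δ / 3) :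
    deriv (tilingCutoff l δ) x =
      Real.cos (cutoffPhase (x / δ)) * (deriv cutoffPhase (x / δ) / δ) := by
  have : tilingCutoff l δ =ᶠ[nhds x] fun y ↦ Real.sin (cutoffPhase (y / δ)) := by
    filter_upwards [Iio_mem_nhds hx] with y hy
    exact tilingCutoff_eq_sin hδ hy
  rw [this.deriv_eq, (hasDerivAt_cutoffPhase_div δ x).sin.deriv]

lemma deriv_tilingCutoff_add (hδ : 0 < δ) (hδl : δ ≤ l) {x : ℝ} (hx : -δ / 3 < x) :
    deriv (tilingCutoff l δ) (x + l) =
      -Real.sin (cutoffPhase (x / δ)) * (deriv cutoffPhase (x / δ) / δ) := by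
  have : (fun y ↦ tilingCutoff l δ (y + l)) =ᶠ[nhds x]
      fun y ↦ Real.cos (cutoffPhase (y / δ)) := by
    filter_upwards [Ioi_mem_nhds hx] with y hy
    exact tilingCutoff_add_eq_cos hδ hδl hy
  rw [← deriv_comp_add_const, this.deriv_eq, (hasDerivAt_cutoffPhase_div δ x).cos.deriv]

theorem exists_isTilingCutoff : ∃ C > 0, ∀ l δ : ℝ, 0 < δ → δ ≤ l →
    IsTilingCutoff l (l + δ) ((C / δ) ^ 2) (tilingCutoff l δ) := by
  obtain ⟨C, hC0, hC⟩ := exists_abs_deriv_cutoffPhase_le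
  refine ⟨C, hC0, fun l δ hδ hδl ↦ ?_⟩
  have hsmooth : ContDiff ℝ ∞ (tilingCutoff l δ) :=
    (Real.contDiff_sin.comp (contDiff_cutoffPhase.comp (by fun_prop))).mul
      (Real.contDiff_cos.comp (contDiff_cutoffPhase.comp (by fun_prop)))
  have hleft : ∀ x ∈ Set.Icc 0 l, x < l + δ / 3 := fun x hx ↦ by linarith [hx.2]
  have hright : ∀ x ∈ Set.Icc 0 l, -δ / 3 < x := fun x hx ↦ by linarith [hx.1]
  refine ⟨hsmooth, tsupport_tilingCutoff_subset hδ, fun x hx ↦ ?_, fun x hx ↦ ?_, fun x hx ↦ ?_⟩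
  · rw [tilingCutoff_eq_sin hδ (hleft x hx), tilingCutoff_add_eq_cos hδ hδl (hright x hx),
      Real.sin_sq_add_cos_sq]
  · rw [tilingCutoff_eq_sin hδ (hleft x hx), tilingCutoff_add_eq_cos hδ hδl (hright x hx),
      deriv_tilingCutoff hδ (hleft x hx), deriv_tilingCutoff_add hδ hδl (hright x hx)]
    ring
  · rw [deriv_tilingCutoff hδ (hleft x hx), deriv_tilingCutoff_add hδ hδl (hright x hx), mul_pow,
      mul_pow, ← add_mul, neg_sq, Real.cos_sq_add_sin_sq, one_mul, div_pow, div_pow]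
    exact div_le_div_of_nonneg_right
      (sq_le_sq' (neg_le_of_abs_le (hC _)) (le_of_abs_le (hC _))) (sq_nonneg δ)

variable {w c : ℝ} {η : ℝ → ℝ}

lemma exists_forall_sum_translates_eq (hl : 0 < l) {N : ℕ} {t : ℝ} (ht : t ∈ Set.Ioc l (N * l)) :
    ∃ s ∈ Set.Icc 0 l, ∀ F : ℝ → ℝ, (∀ x ∉ Set.Ioo 0 (2 * l), F x = 0) →
      ∑ b : Fin N, F (t - b * l) = F s + F (s + l) := by
  set m := ⌈t / l⌉₊
  have htm : t ≤ m * l := (div_le_iff₀ hl).1 (Nat.le_ceil _)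
  have hmt : (m - 1) * l < t := by
    rw [← lt_div_iff₀ hl]
    linarith [Nat.ceil_lt_add_one (div_pos (hl.trans ht.1) hl).le]
  have hm1 : 1 < m := Nat.lt_ceil.2 (by rw [Nat.cast_one, one_lt_div hl]; exact ht.1)
  have hmN : m ≤ N := Nat.ceil_le.2 ((div_le_iff₀ hl).2 ht.2)
  refine ⟨t - (m - 1) * l, ⟨by linarith, by linarith⟩, fun F hF ↦ ?_⟩
  rw [Fin.sum_univ_eq_sum_range fun b ↦ F (t - b * l),
    Finset.sum_eq_add_of_mem (m - 1) (m - 2) (Finset.mem_range.2 (by omega))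
      (Finset.mem_range.2 (by omega)) (by omega), Nat.cast_sub (by omega), Nat.cast_sub (by omega)]
  · push_cast
    congr 2
    ring
  · intro b _ hb
    refine hF _ fun hmem ↦ ?_
    rcases (show m ≤ b ∨ b + 3 ≤ m by omega) with hmb | hbm
    · have : (m : ℝ) * l ≤ b * l := by gcongr
      linarith [hmem.1]
    · have : ((b + 3 : ℕ) : ℝ) * l ≤ m * l := by gcongr
      push_cast at this
      linarith [hmem.2]

lemma IsTilingCutoff.eq_zero (hη : IsTilingCutoff l w c η) {x : ℝ} (hx : x ∉ Set.Ioo 0 w) :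
    η x = 0 :=
  image_eq_zero_of_notMem_tsupport fun h ↦ hx (hη.tsupport_subset h)

lemma IsTilingCutoff.deriv_eq_zero (hη : IsTilingCutoff l w c η) {x : ℝ} (hx : x ∉ Set.Ioo 0 w) :
    deriv η x = 0 :=
  image_eq_zero_of_notMem_tsupport fun h ↦ hx (hη.tsupport_subset (tsupport_deriv_subset h))

end Cutoff

section TrigSum

variable {ι : Type*} {ξ : ι → ℝ} {l : ℝ} {ω : ℂ}

lemma integral_exp_sub_frequency [DecidableEq ι] (hξ : Function.Injective ξ)
    (hω : ∀ r, Complex.exp (Complex.I * ξ r * l) = ω) (r q : ι) :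
    ∫ x in 0..l, Complex.exp (Complex.I * (ξ r - ξ q : ℝ) * x) = if r = q then (l : ℂ) else 0 := by
  split_ifs with hrq
  · simp [hrq]
  have hne : Complex.I * ((ξ r - ξ q : ℝ) : ℂ) ≠ 0 :=
    mul_ne_zero Complex.I_ne_zero (Complex.ofReal_ne_zero.2 (sub_ne_zero.2 (hξ.ne hrq)))
  have hexp : Complex.exp (Complex.I * (ξ r - ξ q : ℝ) * l) = 1 := by
    rw [Complex.ofReal_sub, mul_sub, sub_mul, Complex.exp_sub, hω, hω, div_self]
    exact hω r ▸ Complex.exp_ne_zero _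
  rw [integral_exp_mul_complex hne, hexp]
  simp

variable [Fintype ι]

/-- The trigonometric polynomial with frequencies `ξ` and coefficients `z`. -/
def trigSum (ξ : ι → ℝ) (z : ι → ℂ) (x : ℝ) : ℂ := ∑ r, z r * Complex.exp (Complex.I * ξ r * x)

lemma continuous_trigSum (ξ : ι → ℝ) (z : ι → ℂ) : Continuous (trigSum ξ z) := by
  unfold trigSum
  fun_prop

lemma mul_trigSum_add_mul_trigSum (ξ : ι → ℝ) (A B : ℂ) (z z' : ι → ℂ) (x : ℝ) :
    A * trigSum ξ z x + B * trigSum ξ z' x = trigSum ξ (fun r ↦ A * z r + B * z' r) x := by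
  simp only [trigSum, Finset.mul_sum, ← Finset.sum_add_distrib, add_mul, mul_assoc]

lemma norm_trigSum_add (hω : ∀ r, Complex.exp (Complex.I * ξ r * l) = ω) (z : ι → ℂ) (x : ℝ) :
    ‖trigSum ξ z (x + l)‖ = ‖trigSum ξ z x‖ := by
  rcases isEmpty_or_nonempty ι with _ | ⟨⟨r₀⟩⟩
  · simp [trigSum]
  have hnorm : ‖ω‖ = 1 := by
    rw [← hω r₀, mul_comm Complex.I, mul_right_comm, ← Complex.ofReal_mul,
      Complex.norm_exp_ofReal_mul_I]
  have hshift : trigSum ξ z (x + l) = ω * trigSum ξ z x := by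
    rw [trigSum, trigSum, Finset.mul_sum]
    refine Finset.sum_congr rfl fun r _ ↦ ?_
    rw [Complex.ofReal_add, mul_add, Complex.exp_add, hω r]
    ring
  rw [hshift, norm_mul, hnorm, one_mul]

lemma norm_sq_trigSum (ξ : ι → ℝ) (z : ι → ℂ) (x : ℝ) :
    ((‖trigSum ξ z x‖ ^ 2 : ℝ) : ℂ) = ∑ r, ∑ q, z r * starRingEnd ℂ (z q) *
      Complex.exp (Complex.I * (ξ r - ξ q : ℝ) * x) := by
  rw [← Complex.normSq_eq_norm_sq, ← Complex.mul_conj, trigSum, map_sum, Finset.sum_mul_sum]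
  refine Finset.sum_congr rfl fun r _ ↦ Finset.sum_congr rfl fun q _ ↦ ?_
  rw [map_mul, ← Complex.exp_conj, map_mul, map_mul, Complex.conj_I, Complex.conj_ofReal,
    Complex.conj_ofReal, mul_mul_mul_comm, ← Complex.exp_add]
  push_cast
  ring_nf

lemma integral_norm_sq_trigSum (hξ : Function.Injective ξ)
    (hω : ∀ r, Complex.exp (Complex.I * ξ r * l) = ω) (z : ι → ℂ) :
    ∫ x in 0..l, ‖trigSum ξ z x‖ ^ 2 = l * ∑ r, ‖z r‖ ^ 2 := by
  classical
  have hcomplex : ((∫ x in 0..l, ‖trigSum ξ z x‖ ^ 2 : ℝ) : ℂ) =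
      ∑ r, ∑ q, z r * starRingEnd ℂ (z q) * if r = q then (l : ℂ) else 0 := by
    rw [← intervalIntegral.integral_ofReal]
    simp_rw [norm_sq_trigSum]
    rw [intervalIntegral.integral_finsetSum
      fun r _ ↦ Continuous.intervalIntegrable (by fun_prop) _ _]
    refine Finset.sum_congr rfl fun r _ ↦ ?_
    rw [intervalIntegral.integral_finsetSum
      fun q _ ↦ Continuous.intervalIntegrable (by fun_prop) _ _]
    simp_rw [intervalIntegral.integral_const_mul, integral_exp_sub_frequency hξ hω]
  refine Complex.ofReal_injective (hcomplex.trans ?_)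
  simp only [mul_ite, mul_zero, Finset.sum_ite_eq, Finset.mem_univ, if_true, Complex.mul_conj,
    Complex.normSq_eq_norm_sq, Finset.mul_sum, Complex.ofReal_sum, Complex.ofReal_mul,
    mul_comm (l : ℂ)]

end TrigSum

section Localization

variable {l w c : ℝ} {η : ℝ → ℝ}

lemma norm_ofReal_mul_add_sq (p q : ℝ) (z z' : ℂ) :
    ‖(p : ℂ) * z + q * z'‖ ^ 2 =
      p ^ 2 * ‖z‖ ^ 2 + q ^ 2 * ‖z'‖ ^ 2 + q * p * (2 * (z * starRingEnd ℂ z').re) := by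
  simp only [Complex.sq_norm, Complex.normSq_apply, Complex.add_re, Complex.add_im, Complex.mul_re,
    Complex.mul_im, Complex.ofReal_re, Complex.ofReal_im, Complex.conj_re, Complex.conj_im]
  ring

/-- The cross terms cancel because the squares of the translates sum to a constant. -/
lemma IsTilingCutoff.norm_sq_add_norm_sq_le (hη : IsTilingCutoff l w c η) {x : ℝ}
    (hx : x ∈ Set.Icc 0 l) (z z' : ℂ) :
    ‖(deriv η x : ℝ) * z + η x * z'‖ ^ 2 + ‖(deriv η (x + l) : ℝ) * z + η (x + l) * z'‖ ^ 2 ≤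
      c * ‖z‖ ^ 2 + ‖z'‖ ^ 2 := by
  rw [norm_ofReal_mul_add_sq, norm_ofReal_mul_add_sq]
  calc _ = (deriv η x ^ 2 + deriv η (x + l) ^ 2) * ‖z‖ ^ 2
        + (η x ^ 2 + η (x + l) ^ 2) * ‖z'‖ ^ 2
        + (η x * deriv η x + η (x + l) * deriv η (x + l)) * (2 * (z * starRingEnd ℂ z').re) := by
        ring
    _ ≤ c * ‖z‖ ^ 2 + ‖z'‖ ^ 2 := by
      rw [hη.sq_add_sq x hx, hη.mul_deriv_add x hx, one_mul, zero_mul, add_zero]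
      gcongr
      exact hη.deriv_sq_add_le x hx

lemma IsTilingCutoff.continuous_deriv (hη : IsTilingCutoff l w c η) : Continuous (deriv η) :=
  hη.contDiff.continuous_deriv (by simp)

lemma integral_eq_intervalIntegral_add_translate (hl : 0 ≤ l) {F : ℝ → ℝ} (hF : Continuous F)
    (hzero : ∀ x ∉ Set.Ioo 0 (2 * l), F x = 0) :
    ∫ x, F x = ∫ x in 0..l, (F x + F (x + l)) := by
  have hshift : ∫ x in 0..l, F (x + l) = ∫ x in l..(2 * l), F x := by
    rw [intervalIntegral.integral_comp_add_right, zero_add, two_mul]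
  have hvanish : ∀ x ∉ Set.Ioc 0 (2 * l), F x = 0 :=
    fun x hx ↦ hzero x fun h ↦ hx (Set.Ioo_subset_Ioc_self h)
  rw [intervalIntegral.integral_add (hF.intervalIntegrable _ _)
    (Continuous.intervalIntegrable (by fun_prop) _ _), hshift,
    intervalIntegral.integral_add_adjacent_intervals (hF.intervalIntegrable _ _)
      (hF.intervalIntegrable _ _), intervalIntegral.integral_of_le (by linarith),
    setIntegral_eq_integral_of_forall_compl_eq_zero hvanish]

variable {ι : Type*} [Fintype ι] {ξ : ι → ℝ} {ω : ℂ}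

lemma IsTilingCutoff.integral_norm_sq_mul_trigSum (hη : IsTilingCutoff l w c η) (hl : 0 ≤ l)
    (hw : w ≤ 2 * l) (hξ : Function.Injective ξ)
    (hω : ∀ r, Complex.exp (Complex.I * ξ r * l) = ω) (z : ι → ℂ) :
    ∫ x, ‖(η x : ℂ) * trigSum ξ z x‖ ^ 2 = l * ∑ r, ‖z r‖ ^ 2 := by
  have hcont := continuous_trigSum ξ z
  have hηcont := hη.contDiff.continuous
  rw [integral_eq_intervalIntegral_add_translate hl (by fun_prop) fun x hx ↦ by
    simp [hη.eq_zero fun h ↦ hx (Set.Ioo_subset_Ioo_right hw h)],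
    ← integral_norm_sq_trigSum hξ hω]
  refine intervalIntegral.integral_congr fun x hx ↦ ?_
  rw [Set.uIcc_of_le hl] at hx
  simp only [norm_mul, mul_pow, norm_trigSum_add hω, ← add_mul, Complex.norm_real, norm_eq_abs,
    sq_abs, hη.sq_add_sq x hx, one_mul]

lemma IsTilingCutoff.integral_norm_sq_deriv_mul_trigSum_le (hη : IsTilingCutoff l w c η)
    (hl : 0 ≤ l) (hw : w ≤ 2 * l) (hξ : Function.Injective ξ)
    (hω : ∀ r, Complex.exp (Complex.I * ξ r * l) = ω) (z z' : ι → ℂ) :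
    ∫ x, ‖(deriv η x : ℝ) * trigSum ξ z x + η x * trigSum ξ z' x‖ ^ 2 ≤
      l * ∑ r, (c * ‖z r‖ ^ 2 + ‖z' r‖ ^ 2) := by
  have hcont := continuous_trigSum ξ z
  have hcont' := continuous_trigSum ξ z'
  have hηcont := hη.contDiff.continuous
  have hηcont' := hη.continuous_deriv
  rw [integral_eq_intervalIntegral_add_translate hl (by fun_prop) fun x hx ↦ by
    have hx' : x ∉ Set.Ioo 0 w := fun h ↦ hx (Set.Ioo_subset_Ioo_right hw h)
    simp [hη.eq_zero hx', hη.deriv_eq_zero hx']]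
  calc _ ≤ ∫ x in 0..l, (c * ‖trigSum ξ z x‖ ^ 2 + ‖trigSum ξ z' x‖ ^ 2) := by
        refine intervalIntegral.integral_mono_on hl
          (Continuous.intervalIntegrable (by fun_prop) _ _)
          (Continuous.intervalIntegrable (by fun_prop) _ _) fun x hx ↦ ?_
        rw [mul_trigSum_add_mul_trigSum (x := x + l), norm_trigSum_add hω,
          ← mul_trigSum_add_mul_trigSum]
        exact hη.norm_sq_add_norm_sq_le hx _ _
    _ = l * ∑ r, (c * ‖z r‖ ^ 2 + ‖z' r‖ ^ 2) := by
      rw [intervalIntegral.integral_add (Continuous.intervalIntegrable (by fun_prop) _ _)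
        (Continuous.intervalIntegrable (by fun_prop) _ _), intervalIntegral.integral_const_mul,
        integral_norm_sq_trigSum hξ hω, integral_norm_sq_trigSum hξ hω, Finset.sum_add_distrib,
        ← Finset.mul_sum]
      ring

/-- The quadratic form of the Schrödinger operator `-d²/dt² + V` on the line. -/
def schrodingerForm (V : ℝ → ℝ) (f : ℝ → ℂ) : ℝ := ∫ t, (‖deriv f t‖ ^ 2 + V t * ‖f t‖ ^ 2)

lemma continuous_schrodingerForm_integrand {V : ℝ → ℝ} {f : ℝ → ℂ} (hV : Continuous V)
    (hf : ContDiff ℝ 1 f) : Continuous fun t ↦ ‖deriv f t‖ ^ 2 + V t * ‖f t‖ ^ 2 := by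
  have hf₀ := hf.continuous
  fun_prop

lemma integrable_schrodingerForm_integrand {V : ℝ → ℝ} {f : ℝ → ℂ} (hV : Continuous V)
    (hf : ContDiff ℝ 1 f) (hsupp : HasCompactSupport f) :
    Integrable fun t ↦ ‖deriv f t‖ ^ 2 + V t * ‖f t‖ ^ 2 := by
  refine (continuous_schrodingerForm_integrand hV hf).integrable_of_hasCompactSupport
    (hsupp.mono' fun t ht ↦ ?_)
  contrapose! ht
  simp [image_eq_zero_of_notMem_tsupport ht,
    image_eq_zero_of_notMem_tsupport fun h ↦ ht (tsupport_deriv_subset h)]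

lemma IsTilingCutoff.hasCompactSupport (hη : IsTilingCutoff l w c η) : HasCompactSupport η :=
  (isCompact_Icc (a := 0) (b := w)).of_isClosed_subset (isClosed_tsupport η)
    (hη.tsupport_subset.trans Set.Ioo_subset_Icc_self)

lemma contDiff_ofReal_mul_comp_add {n : WithTop ℕ∞} {f : ℝ → ℂ} (hη : ContDiff ℝ n η)
    (hf : ContDiff ℝ n f) (d : ℝ) : ContDiff ℝ n fun s ↦ η s * f (s + d) :=
  (Complex.ofRealCLM.contDiff.comp hη).mul (hf.comp (by fun_prop))

lemma IsTilingCutoff.deriv_mul (hη : IsTilingCutoff l w c η) {f : ℝ → ℂ} (hf : Differentiable ℝ f)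
    (d s : ℝ) : deriv (fun s ↦ η s * f (s + d)) s =
      (deriv η s : ℝ) * f (s + d) + η s * deriv f (s + d) := by
  have hη' := ((hη.contDiff.differentiable (by simp)) s).hasDerivAt.ofReal_comp
  exact (hη'.mul (HasDerivAt.comp_add_const s d (hf (s + d)).hasDerivAt)).deriv

lemma IsTilingCutoff.sum_translates_le (hη : IsTilingCutoff l w c η) (hl : 0 < l)
    (hw : w ≤ 2 * l) {N : ℕ} {t : ℝ} (ht : t ∈ Set.Ioc l (N * l)) (v : ℝ) (z z' : ℂ) :
    ∑ b : Fin N, (‖(deriv η (t - b * l) : ℝ) * z + η (t - b * l) * z'‖ ^ 2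
      + v * ‖η (t - b * l) * z‖ ^ 2) ≤ ‖z'‖ ^ 2 + (v + c) * ‖z‖ ^ 2 := by
  obtain ⟨s, hs, hsum⟩ := exists_forall_sum_translates_eq hl ht
  rw [hsum (fun x ↦ ‖(deriv η x : ℝ) * z + η x * z'‖ ^ 2 + v * ‖η x * z‖ ^ 2) fun x hx ↦ by
    have hx' : x ∉ Set.Ioo 0 w := fun h ↦ hx (Set.Ioo_subset_Ioo_right hw h)
    simp [hη.eq_zero hx', hη.deriv_eq_zero hx']]
  have hmass : ‖η s * z‖ ^ 2 + ‖η (s + l) * z‖ ^ 2 = ‖z‖ ^ 2 := by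
    simp only [norm_mul, mul_pow, ← add_mul, Complex.norm_real, norm_eq_abs, sq_abs,
      hη.sq_add_sq s hs, one_mul]
  linear_combination hη.norm_sq_add_norm_sq_le hs z z' + v * hmass

/-- The IMS localization formula: for each `t` at most two translates of the cut-off are
nonzero at `t`. -/
theorem IsTilingCutoff.sum_schrodingerForm_le (hη : IsTilingCutoff l w c η) (hl : 0 < l)
    (hw : w ≤ 2 * l) {N : ℕ} {V : ℝ → ℝ} (hV : Continuous V) {f : ℝ → ℂ} (hf : ContDiff ℝ 1 f)
    (hsupp : tsupport f ⊆ Set.Ioc l (N * l)) :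
    ∑ b : Fin N, schrodingerForm (fun s ↦ V (s + b * l)) (fun s ↦ η s * f (s + b * l)) ≤
      schrodingerForm (fun t ↦ V t + c) f := by
  have hη₁ : ContDiff ℝ 1 η := hη.contDiff.of_le (by simp)
  have hint (b : Fin N) := (integrable_schrodingerForm_integrand
    (V := fun s ↦ V (s + b * l)) (f := fun s ↦ η s * f (s + b * l)) (by fun_prop)
    (contDiff_ofReal_mul_comp_add hη₁ hf _)
    (hη.hasCompactSupport.comp_left Complex.ofReal_zero).mul_right).comp_sub_right (b * l)
  have hfcomp : HasCompactSupport f := (isCompact_Icc (a := l) (b := N * l)).of_isClosed_subset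
    (isClosed_tsupport f) (hsupp.trans Set.Ioc_subset_Icc_self)
  simp_rw [schrodingerForm]
  calc _ = ∑ b : Fin N, ∫ t, (‖deriv (fun s ↦ η s * f (s + b * l)) (t - b * l)‖ ^ 2
        + V (t - b * l + b * l) * ‖η (t - b * l) * f (t - b * l + b * l)‖ ^ 2) :=
      Finset.sum_congr rfl fun b _ ↦ (integral_sub_right_eq_self _ _).symm
    _ = ∫ t, ∑ b : Fin N, (‖deriv (fun s ↦ η s * f (s + b * l)) (t - b * l)‖ ^ 2
        + V (t - b * l + b * l) * ‖η (t - b * l) * f (t - b * l + b * l)‖ ^ 2) :=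
      (integral_finsetSum _ fun b _ ↦ hint b).symm
    _ ≤ ∫ t, (‖deriv f t‖ ^ 2 + (V t + c) * ‖f t‖ ^ 2) := by
      refine integral_mono (integrable_finsetSum _ fun b _ ↦ hint b)
        (integrable_schrodingerForm_integrand (by fun_prop) hf hfcomp) fun t ↦ ?_
      simp_rw [hη.deriv_mul (hf.differentiable one_ne_zero), sub_add_cancel]
      by_cases ht : t ∈ tsupport f
      · exact hη.sum_translates_le hl hw (hsupp ht) _ _ _
      · simp [image_eq_zero_of_notMem_tsupport ht,
          image_eq_zero_of_notMem_tsupport fun h ↦ ht (tsupport_deriv_subset h)]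

end Localization

section Gaussian

open Polynomial

variable {β : ℝ}

lemma integrable_eval_mul_exp_neg_mul_sq (hβ : 0 < β) (P : ℝ[X]) :
    Integrable fun s ↦ P.eval s * rexp (-β * s ^ 2) := by
  induction P using Polynomial.induction_on' with
  | add P Q hP hQ => simpa only [eval_add, add_mul] using hP.fun_add hQ
  | monomial n c =>
    have hn : (-1 : ℝ) < n := by linarith [n.cast_nonneg (α := ℝ)]
    simpa only [eval_monomial, Real.rpow_natCast, mul_assoc] using
      (integrable_rpow_mul_exp_neg_mul_sq hβ hn).const_mul c

/-- Integration of polynomials against the Gaussian weight `exp (-β s²)`. -/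
def gaussianIntegral (hβ : 0 < β) : ℝ[X] →ₗ[ℝ] ℝ where
  toFun P := ∫ s, P.eval s * rexp (-β * s ^ 2)
  map_add' P Q := by
    simp only [eval_add, add_mul]
    exact integral_add (integrable_eval_mul_exp_neg_mul_sq hβ P)
      (integrable_eval_mul_exp_neg_mul_sq hβ Q)
  map_smul' c P := by
    simp only [eval_smul, smul_eq_mul, mul_assoc, RingHom.id_apply]
    exact integral_const_mul _ _

lemma gaussianIntegral_C_mul (hβ : 0 < β) (c : ℝ) (P : ℝ[X]) :
    gaussianIntegral hβ (C c * P) = c * gaussianIntegral hβ P := by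
  rw [← smul_eq_C_mul, map_smul, smul_eq_mul]

lemma gaussianIntegral_sq_nonneg (hβ : 0 < β) (P : ℝ[X]) : 0 ≤ gaussianIntegral hβ (P ^ 2) :=
  integral_nonneg fun s ↦ by
    simp only [eval_pow]
    positivity

lemma gaussianIntegral_sq_pos (hβ : 0 < β) {P : ℝ[X]} (hP : P ≠ 0) :
    0 < gaussianIntegral hβ (P ^ 2) := by
  obtain ⟨x, hx⟩ : ∃ x, P.eval x ≠ 0 := by
    by_contra! h
    exact hP (Polynomial.funext (by simpa using h))
  refine integral_pos_of_integrable_nonneg_nonzero (x := x) (by fun_prop)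
    (integrable_eval_mul_exp_neg_mul_sq hβ _) (fun s ↦ ?_) (by simp [hx])
  simp only [eval_pow, Pi.zero_apply]
  positivity

lemma hasDerivAt_exp_neg_mul_sq (β s : ℝ) :
    HasDerivAt (fun s ↦ rexp (-β * s ^ 2)) (rexp (-β * s ^ 2) * (-β * (2 * s))) s := by
  simpa using ((hasDerivAt_pow 2 s).const_mul (-β)).exp

/-- The creation operator, adjoint to the derivative for the weight `exp (-β s²)`. -/
def creation (β : ℝ) (P : ℝ[X]) : ℝ[X] := C (2 * β) * X * P - derivative P

lemma gaussianIntegral_derivative_mul (hβ : 0 < β) (P Q : ℝ[X]) :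
    gaussianIntegral hβ (derivative P * Q) = gaussianIntegral hβ (P * creation β Q) := by
  rw [← sub_eq_zero, ← map_sub]
  refine integral_eq_zero_of_hasDerivAt_of_integrable
    (f := fun s ↦ (P * Q).eval s * rexp (-β * s ^ 2)) (fun s ↦ ?_)
    (integrable_eval_mul_exp_neg_mul_sq hβ _) (integrable_eval_mul_exp_neg_mul_sq hβ _)
  refine (((P * Q).hasDerivAt s).mul (hasDerivAt_exp_neg_mul_sq β s)).congr_deriv ?_
  simp only [creation, derivative_mul, eval_add, eval_sub, eval_mul, eval_C, eval_X]
  ring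

lemma gaussianIntegral_creation_sq (hβ : 0 < β) (P : ℝ[X]) :
    gaussianIntegral hβ (creation β P ^ 2) =
      2 * β * gaussianIntegral hβ (P ^ 2) + gaussianIntegral hβ (derivative P ^ 2) := by
  have hcomm : P * derivative (creation β P) =
      C (2 * β) * P ^ 2 + P * creation β (derivative P) := by
    simp only [creation, derivative_sub, derivative_mul, derivative_C, derivative_X]
    ring
  rw [sq (creation β P), ← gaussianIntegral_derivative_mul, mul_comm, hcomm, map_add,
    gaussianIntegral_C_mul, ← gaussianIntegral_derivative_mul, ← sq]

lemma gaussianIntegral_derivative_sq_le (hβ : 0 < β) (d : ℕ) {P : ℝ[X]} (hP : P.natDegree ≤ d) :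
    gaussianIntegral hβ (derivative P ^ 2) ≤ 2 * β * d * gaussianIntegral hβ (P ^ 2) := by
  induction d generalizing P with
  | zero =>
    rw [derivative_of_natDegree_zero (by omega)]
    simp
  | succ d ih =>
    set Q := derivative P with hQ
    set α := 2 * β * (d + 1)
    have hαpos : 0 < α := by positivity
    have hcreation : gaussianIntegral hβ (creation β Q ^ 2) ≤ α * gaussianIntegral hβ (Q ^ 2) := by
      have hQd : Q.natDegree ≤ d := (natDegree_derivative_le P).trans (by omega)
      rw [gaussianIntegral_creation_sq]
      linarith [ih hQd]
    have hsq : gaussianIntegral hβ ((C α * P - creation β Q) ^ 2) =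
        α ^ 2 * gaussianIntegral hβ (P ^ 2) - 2 * α * gaussianIntegral hβ (Q ^ 2)
          + gaussianIntegral hβ (creation β Q ^ 2) := by
      rw [show (C α * P - creation β Q) ^ 2 = C (α ^ 2) * P ^ 2
        - C (2 * α) * (P * creation β Q) + creation β Q ^ 2 by
          simp only [C_mul, C_pow, C_ofNat]; ring, map_add, map_sub, gaussianIntegral_C_mul,
        gaussianIntegral_C_mul, ← gaussianIntegral_derivative_mul, ← hQ, ← sq]
    have hscaled : α * gaussianIntegral hβ (Q ^ 2) ≤ α * (α * gaussianIntegral hβ (P ^ 2)) := by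
      linarith [gaussianIntegral_sq_nonneg hβ (C α * P - creation β Q)]
    have := le_of_mul_le_mul_left hscaled hαpos
    push_cast
    linarith

/-- Here `P' - β X P = (P' - creation P) / 2` and `β X P = (P' + creation P) / 2`. -/
lemma gaussianIntegral_oscillator (hβ : 0 < β) (P : ℝ[X]) :
    gaussianIntegral hβ ((derivative P - C β * X * P) ^ 2 + (C β * X * P) ^ 2) =
      gaussianIntegral hβ (derivative P ^ 2) + β * gaussianIntegral hβ (P ^ 2) := by
  have hsplit : C 2 * ((derivative P - C β * X * P) ^ 2 + (C β * X * P) ^ 2) =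
      derivative P ^ 2 + creation β P ^ 2 := by
    simp only [creation, C_mul, C_ofNat]
    ring
  have := congrArg (gaussianIntegral hβ) hsplit
  rw [gaussianIntegral_C_mul, map_add _ (derivative P ^ 2), gaussianIntegral_creation_sq] at this
  linarith

lemma gaussianIntegral_oscillator_lt (hβ : 0 < β) {μ : ℝ} {P : ℝ[X]} (hP : P ≠ 0)
    (hμ : (2 * P.natDegree + 1) * β < μ) :
    gaussianIntegral hβ ((derivative P - C β * X * P) ^ 2 + (C β * X * P) ^ 2) <
      μ * gaussianIntegral hβ (P ^ 2) := by
  have hpos := gaussianIntegral_sq_pos hβ hP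
  rw [gaussianIntegral_oscillator]
  linarith [gaussianIntegral_derivative_sq_le hβ _ le_rfl (P := P),
    mul_lt_mul_of_pos_right hμ hpos]

end Gaussian

section CutoffStability

/-- The real bilinear form polarizing `schrodingerForm V`. -/
def schrodingerPairing (V f g : ℝ → ℝ) : ℝ := ∫ s, (deriv f s * deriv g s + V s * (f s * g s))

variable {ι : Type*} [Fintype ι] {V : ℝ → ℝ}

lemma norm_sq_sum_mul_ofReal (c : ι → ℂ) (x : ι → ℝ) :
    ‖∑ k, c k * x k‖ ^ 2 =
      ∑ j, ∑ k, ((c j).re * (c k).re + (c j).im * (c k).im) * (x j * x k) := by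
  simp only [Complex.sq_norm, Complex.normSq_apply, Complex.re_sum, Complex.im_sum,
    Complex.re_mul_ofReal, Complex.im_mul_ofReal, Finset.sum_mul_sum, ← Finset.sum_add_distrib]
  exact Finset.sum_congr rfl fun j _ ↦ Finset.sum_congr rfl fun k _ ↦ by ring

lemma deriv_sum_mul_ofReal {g : ι → ℝ → ℝ} (hg : ∀ k, Differentiable ℝ (g k)) (c : ι → ℂ) (s : ℝ) :
    deriv (fun s ↦ ∑ k, c k * g k s) s = ∑ k, c k * (deriv (g k) s : ℝ) :=
  (HasDerivAt.fun_sum fun k _ ↦ ((hg k s).hasDerivAt.ofReal_comp.const_mul (c k))).deriv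

lemma schrodingerForm_sum {g : ι → ℝ → ℝ} (hg : ∀ k, Differentiable ℝ (g k))
    (hint : ∀ j k, Integrable fun s ↦ deriv (g j) s * deriv (g k) s + V s * (g j s * g k s))
    (c : ι → ℂ) : schrodingerForm V (fun s ↦ ∑ k, c k * g k s) =
      ∑ j, ∑ k, ((c j).re * (c k).re + (c j).im * (c k).im) *
        schrodingerPairing V (g j) (g k) := by
  simp_rw [schrodingerForm, deriv_sum_mul_ofReal hg, norm_sq_sum_mul_ofReal, Finset.mul_sum,
    ← Finset.sum_add_distrib, mul_left_comm (V _) ((_ : ℝ) + _), ← mul_add]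
  rw [integral_finsetSum _ fun j _ ↦ integrable_finsetSum _ fun k _ ↦ (hint j k).const_mul _]
  refine Finset.sum_congr rfl fun j _ ↦ ?_
  rw [integral_finsetSum _ fun k _ ↦ (hint j k).const_mul _]
  simp_rw [integral_const_mul, schrodingerPairing]

lemma integrable_schrodingerPairing_integrand {f g : ℝ → ℝ} (hV : Continuous V)
    (hf : ContDiff ℝ 1 f) (hg : ContDiff ℝ 1 g) (hsupp : HasCompactSupport f) :
    Integrable fun s ↦ deriv f s * deriv g s + V s * (f s * g s) := by
  have hcont : Continuous fun s ↦ deriv f s * deriv g s + V s * (f s * g s) :=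
    ((hf.continuous_deriv le_rfl).mul (hg.continuous_deriv le_rfl)).add
      (hV.mul (hf.continuous.mul hg.continuous))
  exact hcont.integrable_of_hasCompactSupport
    (hsupp.deriv.mul_right.add hsupp.mul_right.mul_left)

lemma schrodingerForm_ofReal {f : ℝ → ℝ} (hf : Differentiable ℝ f) :
    schrodingerForm V (fun s ↦ f s) = schrodingerPairing V f f := by
  simp_rw [schrodingerForm, schrodingerPairing, (hf _).hasDerivAt.ofReal_comp.deriv,
    Complex.norm_real, Real.norm_eq_abs, sq_abs, sq]

lemma schrodingerForm_sum_neg {g : ι → ℝ → ℝ} (hg : ∀ k, Differentiable ℝ (g k))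
    (hint : ∀ j k, Integrable fun s ↦ deriv (g j) s * deriv (g k) s + V s * (g j s * g k s))
    (hneg : ∀ c : ι → ℝ, c ≠ 0 → ∑ j, ∑ k, c j * c k * schrodingerPairing V (g j) (g k) < 0)
    {c : ι → ℂ} (hc : c ≠ 0) : schrodingerForm V (fun s ↦ ∑ k, c k * g k s) < 0 := by
  have hnonpos (d : ι → ℝ) : ∑ j, ∑ k, d j * d k * schrodingerPairing V (g j) (g k) ≤ 0 := by
    rcases eq_or_ne d 0 with rfl | hd
    · simp
    · exact (hneg d hd).le
  simp only [schrodingerForm_sum hg hint, add_mul, Finset.sum_add_distrib]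
  by_cases hre : (fun k ↦ (c k).re) = 0
  · refine add_neg_of_nonpos_of_neg (hnonpos _) (hneg _ fun him ↦ hc ?_)
    exact funext fun k ↦ Complex.ext (congrFun hre k) (congrFun him k)
  · exact add_neg_of_neg_of_nonpos (hneg _ hre) (hnonpos _)

lemma eventually_forall_sum_mul_neg {Y : Type*} [TopologicalSpace Y] {M : Y → ι → ι → ℝ} {y : Y}
    (hM : ∀ j k, ContinuousAt (fun e ↦ M e j k) y)
    (hneg : ∀ c : ι → ℝ, c ≠ 0 → ∑ j, ∑ k, c j * c k * M y j k < 0) :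
    ∀ᶠ e in nhds y, ∀ c : ι → ℝ, c ≠ 0 → ∑ j, ∑ k, c j * c k * M e j k < 0 := by
  have hsphere : ∀ᶠ e in nhds y, ∀ c ∈ Metric.sphere (0 : ι → ℝ) 1,
      ∑ j, ∑ k, c j * c k * M e j k < 0 := by
    refine (isCompact_sphere _ _).eventually_forall_of_forall_eventually fun c hc ↦ ?_
    have hcont : ContinuousAt
        (fun z : Y × (ι → ℝ) ↦ ∑ j, ∑ k, z.2 j * z.2 k * M z.1 j k) (y, c) := by
      refine tendsto_finsetSum _ fun j _ ↦ tendsto_finsetSum _ fun k _ ↦ ?_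
      exact Tendsto.mul (Continuous.tendsto (by fun_prop) _)
        (ContinuousAt.comp (f := Prod.fst) (x := (y, c)) (hM j k) continuousAt_fst)
    exact hcont.eventually_lt continuousAt_const (hneg c (ne_zero_of_mem_unit_sphere ⟨c, hc⟩))
  filter_upwards [hsphere] with e he c hc
  have hunit : ‖c‖⁻¹ • c ∈ Metric.sphere (0 : ι → ℝ) 1 := by simp [norm_smul, hc]
  have hscale : ∑ j, ∑ k, (‖c‖⁻¹ • c) j * (‖c‖⁻¹ • c) k * M e j k =
      (‖c‖⁻¹) ^ 2 * ∑ j, ∑ k, c j * c k * M e j k := by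
    simp only [Finset.mul_sum, Pi.smul_apply, smul_eq_mul]
    exact Finset.sum_congr rfl fun j _ ↦ Finset.sum_congr rfl fun k _ ↦ by ring
  have hpos : 0 < (‖c‖⁻¹) ^ 2 := by positivity
  exact neg_of_mul_neg_right (hscale ▸ he _ hunit) hpos.le

lemma continuousAt_integral_mul {k : ℝ → ℝ → ℝ} (hk : Continuous fun z : ℝ × ℝ ↦ k z.1 z.2)
    {A e₀ : ℝ} (hA : ∀ᶠ e in nhds e₀, ∀ s, |k e s| ≤ A) {h : ℝ → ℝ} (hh : Integrable h) :
    ContinuousAt (fun e ↦ ∫ s, k e s * h s) e₀ := by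
  refine continuousAt_of_dominated (bound := fun s ↦ A * ‖h s‖) ?_ ?_ (hh.norm.const_mul A) ?_
  · exact Eventually.of_forall fun e ↦
      (Continuous.aestronglyMeasurable (by fun_prop)).mul hh.aestronglyMeasurable
  · filter_upwards [hA] with e he
    refine ae_of_all _ fun s ↦ ?_
    rw [norm_mul]
    gcongr
    exact he s
  · exact ae_of_all _ fun s ↦ (Continuous.mul (by fun_prop) continuous_const).continuousAt

variable {θ f g : ℝ → ℝ}

lemma deriv_dilate_mul (hθ : Differentiable ℝ θ) (hf : Differentiable ℝ f) (e s : ℝ) :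
    deriv (fun s ↦ θ (e * s) * f s) s = e * deriv θ (e * s) * f s + θ (e * s) * deriv f s := by
  have hdil : HasDerivAt (fun s ↦ θ (e * s)) (e * deriv θ (e * s)) s :=
    ((hθ (e * s)).hasDerivAt.comp s ((hasDerivAt_id' s).const_mul e)).congr_deriv (by ring)
  exact (hdil.mul (hf s).hasDerivAt).deriv

lemma exists_eventually_abs_dilate_le (hθ : ContDiff ℝ 1 θ) (hθc : HasCompactSupport θ) :
    ∃ A, ∀ᶠ e in nhds (0 : ℝ), ∀ s, |θ (e * s)| ≤ A ∧ |e * deriv θ (e * s)| ≤ A := by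
  obtain ⟨A, hA⟩ := hθc.exists_bound_of_continuous hθ.continuous
  obtain ⟨A', hA'⟩ := hθc.deriv.exists_bound_of_continuous (hθ.continuous_deriv le_rfl)
  refine ⟨max A A', ?_⟩
  filter_upwards [Metric.closedBall_mem_nhds (0 : ℝ) one_pos] with e he s
  refine ⟨(hA _).trans (le_max_left ..), le_trans ?_ ((hA' (e * s)).trans (le_max_right ..))⟩
  rw [abs_mul]
  exact mul_le_of_le_one_left (abs_nonneg _) (by simpa using he)

lemma continuousAt_schrodingerPairing_dilate (hθ : ContDiff ℝ 1 θ) (hθc : HasCompactSupport θ)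
    (hf : Differentiable ℝ f) (hg : Differentiable ℝ g)
    (hmass : Integrable fun s ↦ f s * g s)
    (hcross : Integrable fun s ↦ f s * deriv g s + deriv f s * g s)
    (hform : Integrable fun s ↦ deriv f s * deriv g s + V s * (f s * g s)) :
    ContinuousAt (fun e ↦ schrodingerPairing V (fun s ↦ θ (e * s) * f s)
      (fun s ↦ θ (e * s) * g s)) 0 := by
  have hθ₀ := hθ.continuous
  obtain ⟨A, hA⟩ := exists_eventually_abs_dilate_le hθ hθc
  have hprod {x y : ℝ} (hx : |x| ≤ A) (hy : |y| ≤ A) : |x * y| ≤ A * A := by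
    rw [abs_mul]
    exact mul_le_mul hx hy (abs_nonneg _) ((abs_nonneg _).trans hx)
  have hbound₁ : ∀ᶠ e in nhds 0, ∀ s, |e * deriv θ (e * s) * (e * deriv θ (e * s))| ≤ A * A :=
    hA.mono fun e he s ↦ hprod (he s).2 (he s).2
  have hbound₂ : ∀ᶠ e in nhds 0, ∀ s, |e * deriv θ (e * s) * θ (e * s)| ≤ A * A :=
    hA.mono fun e he s ↦ hprod (he s).2 (he s).1
  have hbound₃ : ∀ᶠ e : ℝ in nhds 0, ∀ s, |θ (e * s) * θ (e * s)| ≤ A * A :=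
    hA.mono fun e he s ↦ hprod (he s).1 (he s).1
  refine (((continuousAt_integral_mul (by fun_prop) hbound₁ hmass).add
    (continuousAt_integral_mul (by fun_prop) hbound₂ hcross)).add
    (continuousAt_integral_mul (by fun_prop) hbound₃ hform)).congr ?_
  filter_upwards [hbound₁, hbound₂, hbound₃] with e h₁ h₂ h₃
  have hint₁ := hmass.bdd_mul (Continuous.aestronglyMeasurable (by fun_prop)) (ae_of_all _ h₁)
  have hint₂ := hcross.bdd_mul (Continuous.aestronglyMeasurable (by fun_prop)) (ae_of_all _ h₂)
  have hint₃ := hform.bdd_mul (Continuous.aestronglyMeasurable (by fun_prop)) (ae_of_all _ h₃)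
  simp only [Pi.add_apply]
  rw [← integral_add hint₁ hint₂, ← integral_add (hint₁.fun_add hint₂) hint₃, schrodingerPairing]
  refine integral_congr_ae (ae_of_all _ fun s ↦ ?_)
  simp only [deriv_dilate_mul (hθ.differentiable one_ne_zero) hf,
    deriv_dilate_mul (hθ.differentiable one_ne_zero) hg]
  ring

end CutoffStability

section Oscillator

open Polynomial

variable {β : ℝ}

/-- The oscillator state `P exp (-β s² / 2)`; its density is a polynomial times the weight of
`gaussianIntegral`. -/
def gaussianState (β : ℝ) (P : ℝ[X]) (s : ℝ) : ℝ := P.eval s * rexp (-(β / 2) * s ^ 2)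

lemma contDiff_gaussianState (β : ℝ) (P : ℝ[X]) {n : WithTop ℕ∞} :
    ContDiff ℝ n (gaussianState β P) := by
  have hP : ContDiff ℝ n fun s ↦ P.eval s := P.contDiff_aeval n
  unfold gaussianState
  fun_prop

lemma differentiable_gaussianState (β : ℝ) (P : ℝ[X]) : Differentiable ℝ (gaussianState β P) :=
  (contDiff_gaussianState β P (n := 1)).differentiable one_ne_zero

lemma deriv_gaussianState (β : ℝ) (P : ℝ[X]) :
    deriv (gaussianState β P) = gaussianState β (derivative P - C β * X * P) := by
  refine deriv_eq fun s ↦ ((P.hasDerivAt s).mul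
    (hasDerivAt_exp_neg_mul_sq (β / 2) s)).congr_deriv ?_
  simp only [gaussianState, eval_sub, eval_mul, eval_C, eval_X]
  ring

lemma gaussianState_mul (β : ℝ) (P Q : ℝ[X]) (s : ℝ) :
    gaussianState β P s * gaussianState β Q s = (P * Q).eval s * rexp (-β * s ^ 2) := by
  rw [gaussianState, gaussianState, mul_mul_mul_comm, ← Real.exp_add, eval_mul]
  ring_nf

/-- The density, with respect to the weight of `gaussianIntegral`, of the oscillator energy
pairing of the states of `P` and `Q`, with `μ` subtracted from the potential. -/
def oscillatorDensity (β μ : ℝ) (P Q : ℝ[X]) : ℝ[X] :=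
  (derivative P - C β * X * P) * (derivative Q - C β * X * Q)
    + C β * X * P * (C β * X * Q) - C μ * (P * Q)

lemma oscillatorDensity_mul_exp (β μ : ℝ) (P Q : ℝ[X]) (s : ℝ) :
    deriv (gaussianState β P) s * deriv (gaussianState β Q) s
        + (β ^ 2 * s ^ 2 - μ) * (gaussianState β P s * gaussianState β Q s) =
      (oscillatorDensity β μ P Q).eval s * rexp (-β * s ^ 2) := by
  simp only [deriv_gaussianState, gaussianState_mul, oscillatorDensity, eval_add, eval_sub,
    eval_mul, eval_C, eval_X]
  ring

lemma schrodingerPairing_gaussianState (hβ : 0 < β) (μ : ℝ) (P Q : ℝ[X]) :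
    schrodingerPairing (fun s ↦ β ^ 2 * s ^ 2 - μ) (gaussianState β P) (gaussianState β Q) =
      gaussianIntegral hβ (oscillatorDensity β μ P Q) :=
  integral_congr_ae (ae_of_all _ (oscillatorDensity_mul_exp β μ P Q))

lemma gaussianIntegral_oscillatorDensity_neg (hβ : 0 < β) {μ : ℝ} {P : ℝ[X]} (hP : P ≠ 0)
    (hμ : (2 * P.natDegree + 1) * β < μ) :
    gaussianIntegral hβ (oscillatorDensity β μ P P) < 0 := by
  simpa only [oscillatorDensity, ← sq, map_sub, gaussianIntegral_C_mul, sub_neg] using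
    gaussianIntegral_oscillator_lt hβ hP hμ

lemma sum_mul_gaussianState_X_pow (β : ℝ) {n : ℕ} (c : Fin n → ℝ) (s : ℝ) :
    ∑ k : Fin n, c k * gaussianState β (X ^ (k : ℕ)) s = gaussianState β (ofFn n c) s := by
  simp only [gaussianState, ofFn_eq_sum_monomial, eval_finsetSum, eval_monomial, eval_pow, eval_X,
    Finset.sum_mul, mul_assoc]

lemma integrable_oscillatorDensity (hβ : 0 < β) (μ : ℝ) (P Q : ℝ[X]) :
    Integrable fun s ↦ deriv (gaussianState β P) s * deriv (gaussianState β Q) s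
        + (β ^ 2 * s ^ 2 - μ) * (gaussianState β P s * gaussianState β Q s) := by
  simpa only [oscillatorDensity_mul_exp] using integrable_eval_mul_exp_neg_mul_sq hβ _

lemma sum_mul_schrodingerPairing_gaussianState_neg (hβ : 0 < β) {n : ℕ} {μ : ℝ}
    (hμ : ∀ k < n, (2 * (k : ℝ) + 1) * β < μ) {c : Fin n → ℝ} (hc : c ≠ 0) :
    ∑ j : Fin n, ∑ k : Fin n, c j * c k * schrodingerPairing (fun s ↦ β ^ 2 * s ^ 2 - μ)
      (gaussianState β (X ^ (j : ℕ))) (gaussianState β (X ^ (k : ℕ))) < 0 := by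
  have hP : ofFn n c ≠ 0 := (map_ne_zero_iff _ (injective_ofFn n)).2 hc
  have hdeg : (ofFn n c).natDegree < n :=
    ofFn_natDegree_lt (Nat.one_le_iff_ne_zero.2 (ne_zero_of_ofFn_ne_zero hP)) c
  calc _ = schrodingerForm (fun s ↦ β ^ 2 * s ^ 2 - μ)
        fun s ↦ ∑ k : Fin n, (c k : ℂ) * gaussianState β (X ^ (k : ℕ)) s := by
        rw [schrodingerForm_sum (fun k ↦ differentiable_gaussianState β _)
          fun j k ↦ integrable_oscillatorDensity hβ μ _ _]
        simp
    _ = schrodingerForm (fun s ↦ β ^ 2 * s ^ 2 - μ) fun s ↦ gaussianState β (ofFn n c) s := by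
        simp only [← sum_mul_gaussianState_X_pow]
        push_cast
        rfl
    _ < 0 := by
        rw [schrodingerForm_ofReal (differentiable_gaussianState β _),
          schrodingerPairing_gaussianState hβ]
        exact gaussianIntegral_oscillatorDensity_neg hβ hP (hμ _ hdeg)

lemma continuousAt_schrodingerPairing_dilate_gaussianState (hβ : 0 < β) (μ : ℝ) {θ : ℝ → ℝ}
    (hθ : ContDiff ℝ 1 θ) (hθc : HasCompactSupport θ) (P Q : ℝ[X]) :
    ContinuousAt (fun e ↦ schrodingerPairing (fun s ↦ β ^ 2 * s ^ 2 - μ)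
      (fun s ↦ θ (e * s) * gaussianState β P s) (fun s ↦ θ (e * s) * gaussianState β Q s)) 0 := by
  have hmul (P Q : ℝ[X]) : Integrable fun s ↦ gaussianState β P s * gaussianState β Q s := by
    simpa only [gaussianState_mul] using integrable_eval_mul_exp_neg_mul_sq hβ _
  refine continuousAt_schrodingerPairing_dilate hθ hθc (differentiable_gaussianState β P)
    (differentiable_gaussianState β Q) (hmul P Q) ?_ (integrable_oscillatorDensity hβ μ P Q)
  simpa only [deriv_gaussianState] using (hmul _ _).fun_add (hmul _ _)

lemma tsupport_bump_dilate_mul_subset (θ : ContDiffBump (0 : ℝ)) {e : ℝ} (he : 0 < e) (f : ℝ → ℝ) :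
    tsupport (fun s ↦ θ (e * s) * f s) ⊆ Set.Icc (-(θ.rOut / e)) (θ.rOut / e) := by
  refine closure_minimal (fun s hs ↦ ?_) isClosed_Icc
  have hball : e * s ∈ Metric.ball 0 θ.rOut := θ.support_eq ▸ left_ne_zero_of_mul hs
  rw [mem_ball_zero_iff, norm_eq_abs, abs_mul, abs_of_pos he] at hball
  exact abs_le.1 ((le_div_iff₀' he).2 hball.le)

lemma exists_oscillator_trial (hβ : 0 < β) {n : ℕ} {μ : ℝ}
    (hμ : ∀ k < n, (2 * (k : ℝ) + 1) * β < μ) :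
    ∃ ρ > 0, ∃ g : Fin n → ℝ → ℝ, (∀ k, ContDiff ℝ (⊤ : ℕ∞) (g k)) ∧
      (∀ k, tsupport (g k) ⊆ Set.Icc (-ρ) ρ) ∧
      ∀ c : Fin n → ℂ, c ≠ 0 →
        schrodingerForm (fun s ↦ β ^ 2 * s ^ 2 - μ) (fun s ↦ ∑ k, c k * g k s) < 0 := by
  let θ : ContDiffBump (0 : ℝ) := default
  have hθone : θ 0 = 1 := θ.one_of_mem_closedBall (Metric.mem_closedBall_self θ.rIn_pos.le)
  have hneg : ∀ᶠ e in nhds (0 : ℝ), ∀ c : Fin n → ℝ, c ≠ 0 → ∑ j, ∑ k, c j * c k *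
      schrodingerPairing (fun s ↦ β ^ 2 * s ^ 2 - μ)
        (fun s ↦ θ (e * s) * gaussianState β (X ^ (j : ℕ)) s)
        (fun s ↦ θ (e * s) * gaussianState β (X ^ (k : ℕ)) s) < 0 := by
    refine eventually_forall_sum_mul_neg (fun j k ↦
      continuousAt_schrodingerPairing_dilate_gaussianState hβ μ θ.contDiff θ.hasCompactSupport _ _)
      fun c hc ↦ ?_
    simpa only [zero_mul, hθone, one_mul] using
      sum_mul_schrodingerPairing_gaussianState_neg hβ hμ hc
  obtain ⟨e, hneg_e, he : 0 < e⟩ :=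
    ((hneg.filter_mono nhdsWithin_le_nhds).and (self_mem_nhdsWithin (s := Set.Ioi 0))).exists
  set g : Fin n → ℝ → ℝ := fun k s ↦ θ (e * s) * gaussianState β (X ^ (k : ℕ)) s
  have hg (k) : ContDiff ℝ (⊤ : ℕ∞) (g k) :=
    (θ.contDiff.comp (contDiff_const.mul contDiff_id)).mul (contDiff_gaussianState β _)
  have hsupp (k) : tsupport (g k) ⊆ Set.Icc (-(θ.rOut / e)) (θ.rOut / e) :=
    tsupport_bump_dilate_mul_subset θ he _
  refine ⟨θ.rOut / e, div_pos θ.rOut_pos he, g, hg, hsupp, fun c hc ↦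
    schrodingerForm_sum_neg (fun k ↦ (hg k).differentiable (by simp)) (fun j k ↦ ?_) hneg_e hc⟩
  exact integrable_schrodingerPairing_integrand (by fun_prop) ((hg j).of_le (by simp))
    ((hg k).of_le (by simp)) (isCompact_Icc.of_isClosed_subset (isClosed_tsupport _) (hsupp j))

end Oscillator

section WaveSum

variable {ι : Type*} [Fintype ι] {ξ : ι → ℝ} {h : ι → ℝ → ℂ} {η : ℝ → ℝ} {l w c : ℝ} {ω : ℂ}

/-- The superposition of plane waves `e^{iξ x}` in `x` with amplitudes `h` in `t`, cut off in `x`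
by `η`. -/
def waveSum (η : ℝ → ℝ) (ξ : ι → ℝ) (h : ι → ℝ → ℂ) (p : ℝ × ℝ) : ℂ :=
  η p.1 * trigSum ξ (fun r ↦ h r p.2) p.1

lemma contDiff_waveSum {n : WithTop ℕ∞} (hη : ContDiff ℝ n η) (hh : ∀ r, ContDiff ℝ n (h r)) :
    ContDiff ℝ n (waveSum η ξ h) := by
  have hofReal : ContDiff ℝ n fun p : ℝ × ℝ ↦ (p.1 : ℂ) :=
    Complex.ofRealCLM.contDiff.comp contDiff_fst
  refine (Complex.ofRealCLM.contDiff.comp (hη.comp contDiff_fst)).mul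
    (ContDiff.sum fun r _ ↦ ((hh r).comp contDiff_snd).mul ?_)
  exact (contDiff_const.mul hofReal).cexp

lemma tsupport_waveSum_subset {T : Set ℝ} (hT : IsClosed T) (hh : ∀ r, ∀ s ∉ T, h r s = 0) :
    tsupport (waveSum η ξ h) ⊆ tsupport η ×ˢ T := by
  refine closure_minimal (fun p hp ↦ ⟨subset_closure ?_, ?_⟩) ((isClosed_tsupport η).prod hT)
  · exact fun hzero ↦ hp (by simp [waveSum, hzero])
  · by_contra hs
    exact hp (by simp [waveSum, trigSum, hh _ _ hs])

lemma hasDerivAt_trigSum (ξ : ι → ℝ) (z : ι → ℂ) (x : ℝ) :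
    HasDerivAt (trigSum ξ z) (trigSum ξ (fun r ↦ Complex.I * ξ r * z r) x) x := by
  refine HasDerivAt.fun_sum fun r _ ↦ ?_
  refine ((((hasDerivAt_id' x).ofReal_comp.const_mul (Complex.I * ξ r)).cexp).const_mul
    (z r)).congr_deriv ?_
  push_cast
  ring

lemma dX_waveSum (hη : ContDiff ℝ 1 η) (hh : ∀ r, ContDiff ℝ 1 (h r)) (x s : ℝ) :
    dX (waveSum η ξ h) (x, s) = (deriv η x : ℝ) * trigSum ξ (fun r ↦ h r s) x
      + η x * trigSum ξ (fun r ↦ Complex.I * ξ r * h r s) x :=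
  (hasDerivAt_slice_fst ((contDiff_waveSum hη hh).differentiable one_ne_zero) x s).unique
    ((hη.differentiable one_ne_zero x).hasDerivAt.ofReal_comp.mul
      (hasDerivAt_trigSum ξ (fun r ↦ h r s) x))

lemma dY_waveSum (hη : ContDiff ℝ 1 η) (hh : ∀ r, ContDiff ℝ 1 (h r)) (x s : ℝ) :
    dY (waveSum η ξ h) (x, s) = η x * trigSum ξ (fun r ↦ deriv (h r) s) x := by
  have hsum : HasDerivAt (fun s ↦ trigSum ξ (fun r ↦ h r s) x)
      (trigSum ξ (fun r ↦ deriv (h r) s) x) s :=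
    HasDerivAt.fun_sum fun r _ ↦ ((hh r).differentiable one_ne_zero s).hasDerivAt.mul_const _
  exact (hasDerivAt_slice_snd ((contDiff_waveSum hη hh).differentiable one_ne_zero) x s).unique
    (hsum.const_mul (η x : ℂ))

/-- The density `κ |(-i∂ₓ - A)u|² + |∂ₜu|² + v |u|²` of a magnetic form whose vector potential
depends on `t` only. -/
def magneticDensity (κ : ℝ) (A : ℝ → ℝ) (v : ℝ) (u : ℝ × ℝ → ℂ) (p : ℝ × ℝ) : ℝ :=
  κ * ‖-Complex.I * dX u p - A p.2 * u p‖ ^ 2 + ‖dY u p‖ ^ 2 + v * ‖u p‖ ^ 2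

lemma magnetic_dX_waveSum (hη : ContDiff ℝ 1 η) (hh : ∀ r, ContDiff ℝ 1 (h r)) (α x s : ℝ) :
    -Complex.I * dX (waveSum η ξ h) (x, s) - α * waveSum η ξ h (x, s) =
      (deriv η x : ℝ) * trigSum ξ (fun r ↦ -Complex.I * h r s) x
        + η x * trigSum ξ (fun r ↦ (ξ r - α : ℝ) * h r s) x := by
  rw [dX_waveSum hη hh, waveSum]
  simp only [trigSum, Finset.mul_sum, ← Finset.sum_add_distrib, ← Finset.sum_sub_distrib]
  refine Finset.sum_congr rfl fun r _ ↦ ?_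
  push_cast
  linear_combination -(η x * ξ r * h r s * Complex.exp (Complex.I * ξ r * x)) * Complex.I_sq

lemma magneticDensity_waveSum (hη : ContDiff ℝ 1 η) (hh : ∀ r, ContDiff ℝ 1 (h r)) (κ : ℝ)
    (A : ℝ → ℝ) (v x s : ℝ) :
    magneticDensity κ A v (waveSum η ξ h) (x, s) =
      κ * ‖(deriv η x : ℝ) * trigSum ξ (fun r ↦ -Complex.I * h r s) x
          + η x * trigSum ξ (fun r ↦ (ξ r - A s : ℝ) * h r s) x‖ ^ 2
        + ‖η x * trigSum ξ (fun r ↦ deriv (h r) s) x‖ ^ 2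
        + v * ‖η x * trigSum ξ (fun r ↦ h r s) x‖ ^ 2 := by
  rw [magneticDensity, magnetic_dX_waveSum hη hh, dY_waveSum hη hh, waveSum]

lemma IsTilingCutoff.integrable_norm_sq_deriv_mul_trigSum (hη : IsTilingCutoff l w c η)
    (z z' : ι → ℂ) :
    Integrable fun x ↦ ‖(deriv η x : ℝ) * trigSum ξ z x + η x * trigSum ξ z' x‖ ^ 2 := by
  have hη₀ := hη.contDiff.continuous
  have hη₁ := hη.continuous_deriv
  have hz := continuous_trigSum ξ z
  have hz' := continuous_trigSum ξ z'
  refine Continuous.integrable_of_hasCompactSupport (by fun_prop)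
    (hη.hasCompactSupport.mono' fun x hx ↦ ?_)
  contrapose! hx
  simp [image_eq_zero_of_notMem_tsupport hx,
    image_eq_zero_of_notMem_tsupport fun h ↦ hx (tsupport_deriv_subset h)]

lemma IsTilingCutoff.integrable_norm_sq_mul_trigSum (hη : IsTilingCutoff l w c η) (z : ι → ℂ) :
    Integrable fun x ↦ ‖η x * trigSum ξ z x‖ ^ 2 := by
  simpa [trigSum] using hη.integrable_norm_sq_deriv_mul_trigSum (ξ := ξ) 0 z

lemma IsTilingCutoff.integral_magneticDensity_waveSum_slice_le (hη : IsTilingCutoff l w c η)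
    (hl : 0 ≤ l) (hw : w ≤ 2 * l) (hξ : Function.Injective ξ)
    (hω : ∀ r, Complex.exp (Complex.I * ξ r * l) = ω) (hh : ∀ r, ContDiff ℝ 1 (h r)) {κ : ℝ}
    (hκ : 0 ≤ κ) (A : ℝ → ℝ) (v s : ℝ) :
    ∫ x, magneticDensity κ A v (waveSum η ξ h) (x, s) ≤
      l * ∑ r, (‖deriv (h r) s‖ ^ 2 + (κ * (c + (ξ r - A s) ^ 2) + v) * ‖h r s‖ ^ 2) := by
  have hC₁ : ContDiff ℝ 1 η := hη.contDiff.of_le (by simp)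
  have hmag := (hη.integrable_norm_sq_deriv_mul_trigSum (ξ := ξ) (fun r ↦ -Complex.I * h r s)
    fun r ↦ (ξ r - A s : ℝ) * h r s).const_mul κ
  have hdt := hη.integrable_norm_sq_mul_trigSum (ξ := ξ) fun r ↦ deriv (h r) s
  have hmass := (hη.integrable_norm_sq_mul_trigSum (ξ := ξ) fun r ↦ h r s).const_mul v
  simp_rw [magneticDensity_waveSum hC₁ hh]
  rw [integral_add (hmag.fun_add hdt) hmass, integral_add hmag hdt,
    integral_const_mul, integral_const_mul, hη.integral_norm_sq_mul_trigSum hl hw hξ hω,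
    hη.integral_norm_sq_mul_trigSum hl hw hξ hω]
  have hle := mul_le_mul_of_nonneg_left (hη.integral_norm_sq_deriv_mul_trigSum_le hl hw hξ hω
    (fun r ↦ -Complex.I * h r s) (fun r ↦ (ξ r - A s : ℝ) * h r s)) hκ
  refine (add_le_add_left (add_le_add_left hle _) _).trans_eq ?_
  simp only [Finset.mul_sum, ← Finset.sum_add_distrib, norm_mul, norm_neg, Complex.norm_I, one_mul,
    Complex.norm_real, mul_pow, norm_eq_abs, sq_abs]
  exact Finset.sum_congr rfl fun r _ ↦ by ring

lemma integrable_magneticDensity {Ω : Set (ℝ × ℝ)} {u : ℝ × ℝ → ℂ} (hu : IsTestOn Ω u) (κ : ℝ)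
    {A : ℝ → ℝ} (hA : Continuous A) (v : ℝ) : Integrable (magneticDensity κ A v u) := by
  have hu₀ := hu.1.continuous
  have hX := hu.continuous_dX
  have hY := hu.continuous_dY
  refine Continuous.integrable_of_hasCompactSupport (by unfold magneticDensity; fun_prop)
    (hu.2.1.mono' fun p hp ↦ ?_)
  contrapose! hp
  simp [magneticDensity, dX, dY, image_eq_zero_of_notMem_tsupport hp,
    image_eq_zero_of_notMem_tsupport fun h ↦ hp (tsupport_fderiv_subset ℝ h)]

lemma IsTilingCutoff.integral_magneticDensity_waveSum_le (hη : IsTilingCutoff l w c η)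
    (hl : 0 ≤ l) (hw : w ≤ 2 * l) (hξ : Function.Injective ξ)
    (hω : ∀ r, Complex.exp (Complex.I * ξ r * l) = ω) (hh : ∀ r, ContDiff ℝ 1 (h r))
    (hsupp : ∀ r, HasCompactSupport (h r)) {Ω : Set (ℝ × ℝ)} (hΩ : IsTestOn Ω (waveSum η ξ h))
    {κ : ℝ} (hκ : 0 ≤ κ) {A : ℝ → ℝ} (hA : Continuous A) (v : ℝ) :
    ∫ p, magneticDensity κ A v (waveSum η ξ h) p ≤
      l * ∑ r, schrodingerForm (fun s ↦ κ * (c + (ξ r - A s) ^ 2) + v) (h r) := by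
  have hint := integrable_magneticDensity hΩ κ hA v
  have hint_r (r : ι) := integrable_schrodingerForm_integrand
    (V := fun s ↦ κ * (c + (ξ r - A s) ^ 2) + v) (by fun_prop) (hh r) (hsupp r)
  rw [Measure.volume_eq_prod, integral_prod_symm _ hint]
  simp_rw [schrodingerForm]
  rw [← integral_finsetSum _ fun r _ ↦ hint_r r, ← integral_const_mul]
  exact integral_mono hint.integral_prod_right
    ((integrable_finsetSum _ fun r _ ↦ hint_r r).const_mul l) fun s ↦
      hη.integral_magneticDensity_waveSum_slice_le hl hw hξ hω hh hκ A v s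

end WaveSum

section Trial

variable {Ω : Set (ℝ × ℝ)} {t₀ b₀ lam : ℝ}

lemma re_shiftedForm_eq_integral_magneticDensity (u : testSubmodule Ω) :
    RCLike.re (shiftedForm Ω t₀ b₀ lam u u) =
      ∫ p, magneticDensity (rexp (2 * t₀)) (fun t ↦ -(t - t₀) * rexp (-t₀) * b₀) (1 / 4 - lam)
        u p := by
  rw [re_shiftedForm_apply_self, ← u.2.setIntegral_density]
  refine setIntegral_eq_integral_of_forall_compl_eq_zero fun p hp ↦ ?_
  simp [magneticDX, dX, dY, u.2.eq_zero_of_notMem hp, u.2.fderiv_eq_zero_of_notMem hp]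

lemma magneticDensity_translate (κ : ℝ) (A : ℝ → ℝ) (v : ℝ) (u : ℝ × ℝ → ℂ) (p₀ p : ℝ × ℝ) :
    magneticDensity κ A v (fun p ↦ u (p - p₀)) p =
      magneticDensity κ (fun s ↦ A (s + p₀.2)) v u (p - p₀) := by
  simp [magneticDensity, dX, dY, fderiv_comp_sub]

lemma re_shiftedForm_translate {u : ℝ × ℝ → ℂ} {p₀ : ℝ × ℝ}
    (hu : IsTestOn Ω fun p ↦ u (p - p₀)) :
    RCLike.re (shiftedForm Ω t₀ b₀ lam ⟨_, hu⟩ ⟨_, hu⟩) =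
      ∫ p, magneticDensity (rexp (2 * t₀)) (fun s ↦ -(s + p₀.2 - t₀) * rexp (-t₀) * b₀)
        (1 / 4 - lam) u p := by
  rw [re_shiftedForm_eq_integral_magneticDensity]
  simp_rw [magneticDensity_translate]
  exact integral_sub_right_eq_self (magneticDensity _ _ _ u) p₀

variable {ι κ : Type*} [Fintype κ]

/-- The open rectangle with lower left corner `p` and side lengths `w₁`, `w₂`. -/
def cornerRect (p : ℝ × ℝ) (w₁ w₂ : ℝ) : Set (ℝ × ℝ) :=
  Set.Ioo p.1 (p.1 + w₁) ×ˢ Set.Ioo p.2 (p.2 + w₂)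

/-- The amplitudes of the trial function on one tile: superpositions of the profiles `g` centred
at `m r`, seen from the tile at height `d` and cut off by `η`. -/
def tileAmplitude (η : ℝ → ℝ) (g : κ → ℝ → ℝ) (m : ι → ℝ) (d : ℝ) (c : ι → κ → ℂ) (r : ι) (s : ℝ) :
    ℂ :=
  η s * ∑ k, c r k * g k (s + d - m r)

/-- The frequency for which the magnetic well of `e^{iξx}` in the tile at height `d` is centred at
`m r`. -/
def tileFrequency (t₀ b₀ : ℝ) (p₀ : ℝ × ℝ) (m : ι → ℝ) (d : ℝ) (r : ι) : ℝ :=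
  rexp (-t₀) * b₀ * (d - m r + t₀ - p₀.2)

variable {l₁ w₁ c₁ l₂ w₂ c₂ : ℝ} {η₁ η₂ : ℝ → ℝ} {g : κ → ℝ → ℝ} {m : ι → ℝ}

lemma contDiff_tileAmplitude (hη : IsTilingCutoff l₂ w₂ c₂ η₂)
    (hg : ∀ k, ContDiff ℝ (⊤ : ℕ∞) (g k)) (d : ℝ) (c : ι → κ → ℂ) (r : ι) :
    ContDiff ℝ (⊤ : ℕ∞) (tileAmplitude η₂ g m d c r) :=
  (Complex.ofRealCLM.contDiff.comp hη.contDiff).mul (ContDiff.sum fun k _ ↦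
    contDiff_const.mul (Complex.ofRealCLM.contDiff.comp ((hg k).comp (by fun_prop))))

lemma injective_tileFrequency (hm : Function.Injective m) (hb₀ : b₀ ≠ 0) (p₀ : ℝ × ℝ) (d : ℝ) :
    Function.Injective (tileFrequency t₀ b₀ p₀ m d) := fun r q hrq ↦ hm <| by
  have := mul_left_cancel₀ (mul_ne_zero (Real.exp_pos _).ne' hb₀) hrq
  linarith

lemma exp_tileFrequency {ω : ℂ} {r : ι}
    (hω : Complex.exp (-(Complex.I * (rexp (-t₀) * b₀ : ℝ) * m r * l₁)) = ω) (p₀ : ℝ × ℝ) (d : ℝ) :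
    Complex.exp (Complex.I * tileFrequency t₀ b₀ p₀ m d r * l₁) =
      Complex.exp (Complex.I * (rexp (-t₀) * b₀ * (d + t₀ - p₀.2) : ℝ) * l₁) * ω := by
  rw [← hω, ← Complex.exp_add, tileFrequency]
  push_cast
  ring_nf

lemma well_tileFrequency (t₀ b₀ c₁ lam : ℝ) (p₀ : ℝ × ℝ) (m : ι → ℝ) (d : ℝ) (r : ι) (s : ℝ) :
    rexp (2 * t₀) * (c₁ + (tileFrequency t₀ b₀ p₀ m d r - -(s + p₀.2 - t₀) * rexp (-t₀) * b₀) ^ 2)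
        + (1 / 4 - lam) =
      b₀ ^ 2 * (s + d - m r) ^ 2 + (rexp (2 * t₀) * c₁ + 1 / 4 - lam) := by
  have hexp : rexp (2 * t₀) * rexp (-t₀) ^ 2 = 1 := by
    rw [← Real.exp_nat_mul, ← Real.exp_add]
    simp
  rw [tileFrequency]
  linear_combination b₀ ^ 2 * (s + d - m r) ^ 2 * hexp

variable [Fintype ι]

lemma isTestOn_waveSum_tileAmplitude (hη₁ : IsTilingCutoff l₁ w₁ c₁ η₁)
    (hη₂ : IsTilingCutoff l₂ w₂ c₂ η₂) (hg : ∀ k, ContDiff ℝ (⊤ : ℕ∞) (g k)) (ξ : ι → ℝ) (d : ℝ)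
    (c : ι → κ → ℂ) :
    IsTestOn (Set.Ioo 0 w₁ ×ˢ Set.Ioo 0 w₂) (waveSum η₁ ξ (tileAmplitude η₂ g m d c)) := by
  have hsupp : tsupport (waveSum η₁ ξ (tileAmplitude η₂ g m d c)) ⊆ tsupport η₁ ×ˢ tsupport η₂ :=
    tsupport_waveSum_subset (isClosed_tsupport η₂) fun r s hs ↦ by
      simp [tileAmplitude, image_eq_zero_of_notMem_tsupport hs]
  exact ⟨contDiff_waveSum hη₁.contDiff (contDiff_tileAmplitude hη₂ hg d c),
    (hη₁.hasCompactSupport.isCompact.prod hη₂.hasCompactSupport.isCompact).of_isClosed_subset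
      (isClosed_tsupport _) hsupp,
    hsupp.trans (Set.prod_mono hη₁.tsupport_subset hη₂.tsupport_subset)⟩

lemma IsTestOn.comp_sub_corner {u : ℝ × ℝ → ℂ} (hu : IsTestOn (Set.Ioo 0 w₁ ×ˢ Set.Ioo 0 w₂) u)
    (p₀ : ℝ × ℝ) : IsTestOn (cornerRect p₀ w₁ w₂) fun p ↦ u (p - p₀) := by
  have hsupp : tsupport (fun p ↦ u (p - p₀)) ⊆ (· - p₀) ⁻¹' tsupport u :=
    tsupport_comp_subset_preimage u (continuous_id.sub continuous_const)
  refine ⟨hu.1.comp (contDiff_id.sub contDiff_const),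
    hu.2.1.comp_homeomorph (Homeomorph.subRight p₀), fun p hp ↦ ?_⟩
  obtain ⟨⟨h₁, h₂⟩, h₃, h₄⟩ := hu.2.2 (hsupp hp)
  simp only [Prod.fst_sub, Prod.snd_sub] at h₁ h₂ h₃ h₄
  exact ⟨⟨by linarith, by linarith⟩, by linarith, by linarith⟩

/-- The trial function on the tile at height `d`, as a linear function of its coefficients. -/
def tileTrial (hη₁ : IsTilingCutoff l₁ w₁ c₁ η₁) (hη₂ : IsTilingCutoff l₂ w₂ c₂ η₂)
    (hg : ∀ k, ContDiff ℝ (⊤ : ℕ∞) (g k)) (m : ι → ℝ) (t₀ b₀ : ℝ) (p₀ : ℝ × ℝ) (d : ℝ) :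
    (ι → κ → ℂ) →ₗ[ℂ] testSubmodule (cornerRect p₀ w₁ w₂) where
  toFun c := ⟨fun p ↦ waveSum η₁ (tileFrequency t₀ b₀ p₀ m d) (tileAmplitude η₂ g m d c) (p - p₀),
    (isTestOn_waveSum_tileAmplitude hη₁ hη₂ hg _ d c).comp_sub_corner p₀⟩
  map_add' c c' := by
    ext p
    simp only [waveSum, trigSum, tileAmplitude, Pi.add_apply, add_mul, mul_add,
      Finset.sum_add_distrib, Submodule.coe_add]
  map_smul' z c := by
    ext p
    simp only [waveSum, trigSum, tileAmplitude, Pi.smul_apply, smul_eq_mul, Finset.mul_sum,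
      RingHom.id_apply, Submodule.coe_smul, Finset.sum_mul]
    exact Finset.sum_congr rfl fun r _ ↦ Finset.sum_congr rfl fun k _ ↦ by ring

variable {ω : ℂ} (hη₁ : IsTilingCutoff l₁ w₁ c₁ η₁) (hη₂ : IsTilingCutoff l₂ w₂ c₂ η₂)
  (hg : ∀ k, ContDiff ℝ (⊤ : ℕ∞) (g k))

lemma re_shiftedForm_tileTrial_le (hl₁ : 0 ≤ l₁) (hw₁ : w₁ ≤ 2 * l₁) (hm : Function.Injective m)
    (hω : ∀ r, Complex.exp (-(Complex.I * (rexp (-t₀) * b₀ : ℝ) * m r * l₁)) = ω) (hb₀ : b₀ ≠ 0)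
    (p₀ : ℝ × ℝ) (d : ℝ) (c : ι → κ → ℂ) :
    RCLike.re (shiftedForm (cornerRect p₀ w₁ w₂) t₀ b₀ lam
        (tileTrial hη₁ hη₂ hg m t₀ b₀ p₀ d c) (tileTrial hη₁ hη₂ hg m t₀ b₀ p₀ d c)) ≤
      l₁ * ∑ r, schrodingerForm
        (fun s ↦ b₀ ^ 2 * (s + d - m r) ^ 2 + (rexp (2 * t₀) * c₁ + 1 / 4 - lam))
        (tileAmplitude η₂ g m d c r) := by
  have hcomp (r : ι) : HasCompactSupport (tileAmplitude η₂ g m d c r) :=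
    (hη₂.hasCompactSupport.comp_left Complex.ofReal_zero).mul_right
  have hle := hη₁.integral_magneticDensity_waveSum_le hl₁ hw₁ (injective_tileFrequency hm hb₀ p₀ d)
    (fun r ↦ exp_tileFrequency (hω r) p₀ d)
    (fun r ↦ (contDiff_tileAmplitude hη₂ hg d c r).of_le (by simp)) hcomp
    (isTestOn_waveSum_tileAmplitude hη₁ hη₂ hg _ d c) (Real.exp_pos (2 * t₀)).le
    (A := fun s ↦ -(s + p₀.2 - t₀) * rexp (-t₀) * b₀) (by fun_prop) (1 / 4 - lam)
  simp_rw [well_tileFrequency] at hle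
  exact (re_shiftedForm_translate _).trans_le hle

lemma schrodingerForm_translate (V : ℝ → ℝ) (f : ℝ → ℂ) (a : ℝ) :
    schrodingerForm (fun t ↦ V (t - a)) (fun t ↦ f (t - a)) = schrodingerForm V f := by
  simp_rw [schrodingerForm, deriv_comp_sub_const]
  exact integral_sub_right_eq_self (fun t ↦ ‖deriv f t‖ ^ 2 + V t * ‖f t‖ ^ 2) a

lemma tsupport_sum_translate_subset {ρ : ℝ} (hρ : ∀ k, tsupport (g k) ⊆ Set.Icc (-ρ) ρ)
    (z : κ → ℂ) (a : ℝ) :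
    tsupport (fun t ↦ ∑ k, z k * g k (t - a)) ⊆ Set.Icc (a - ρ) (a + ρ) := by
  refine closure_minimal (fun t ht ↦ ?_) isClosed_Icc
  obtain ⟨k, -, hk⟩ := Finset.exists_ne_zero_of_sum_ne_zero ht
  obtain ⟨h₁, h₂⟩ := hρ k (subset_tsupport _ fun hzero : g k (t - a) = 0 ↦ hk (by simp [hzero]))
  exact ⟨by linarith, by linarith⟩

lemma sum_re_shiftedForm_tileTrial_le (hl₁ : 0 ≤ l₁) (hw₁ : w₁ ≤ 2 * l₁) (hl₂ : 0 < l₂)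
    (hw₂ : w₂ ≤ 2 * l₂) (hm : Function.Injective m)
    (hω : ∀ r, Complex.exp (-(Complex.I * (rexp (-t₀) * b₀ : ℝ) * m r * l₁)) = ω) (hb₀ : b₀ ≠ 0)
    (p₀ : ℝ × ℝ) {ρ : ℝ} (hρ : ∀ k, tsupport (g k) ⊆ Set.Icc (-ρ) ρ) {N : ℕ}
    (hN : ∀ r, Set.Icc (m r - ρ) (m r + ρ) ⊆ Set.Ioc l₂ (N * l₂)) (c : ι → κ → ℂ) :
    ∑ b : Fin N, RCLike.re (shiftedForm (cornerRect p₀ w₁ w₂) t₀ b₀ lam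
        (tileTrial hη₁ hη₂ hg m t₀ b₀ p₀ (b * l₂) c)
        (tileTrial hη₁ hη₂ hg m t₀ b₀ p₀ (b * l₂) c)) ≤
      l₁ * ∑ r, schrodingerForm (fun t ↦ b₀ ^ 2 * t ^ 2 - (lam - 1 / 4 - rexp (2 * t₀) * c₁ - c₂))
        (fun t ↦ ∑ k, c r k * g k t) := by
  refine (Finset.sum_le_sum fun (b : Fin N) _ ↦ re_shiftedForm_tileTrial_le hη₁ hη₂ hg hl₁ hw₁ hm
    hω hb₀ p₀ (b * l₂) c).trans ?_
  rw [← Finset.mul_sum, Finset.sum_comm]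
  refine mul_le_mul_of_nonneg_left (Finset.sum_le_sum fun r _ ↦ ?_) hl₁
  have hsmooth : ContDiff ℝ 1 fun t ↦ ∑ k, c r k * g k (t - m r) :=
    ContDiff.sum fun k _ ↦ contDiff_const.mul (Complex.ofRealCLM.contDiff.comp
      (((hg k).of_le (by simp)).comp (by fun_prop)))
  refine (hη₂.sum_schrodingerForm_le hl₂ hw₂
    (V := fun t ↦ b₀ ^ 2 * (t - m r) ^ 2 + (rexp (2 * t₀) * c₁ + 1 / 4 - lam)) (by fun_prop)
    hsmooth ((tsupport_sum_translate_subset hρ (c r) (m r)).trans (hN r))).trans_eq ?_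
  rw [← schrodingerForm_translate _ (fun t ↦ ∑ k, c r k * g k t) (m r)]
  exact congrArg (schrodingerForm · _) (funext fun t ↦ by ring)

lemma card_mul_card_le_of_tiling (hη₁ : IsTilingCutoff l₁ w₁ c₁ η₁)
    (hη₂ : IsTilingCutoff l₂ w₂ c₂ η₂) (hg : ∀ k, ContDiff ℝ (⊤ : ℕ∞) (g k)) (hl₁ : 0 < l₁)
    (hw₁ : w₁ ≤ 2 * l₁) (hl₂ : 0 < l₂) (hw₂ : w₂ ≤ 2 * l₂) (hm : Function.Injective m)
    (hω : ∀ r, Complex.exp (-(Complex.I * (rexp (-t₀) * b₀ : ℝ) * m r * l₁)) = ω) (hb₀ : b₀ ≠ 0)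
    {ρ : ℝ} (hρ : ∀ k, tsupport (g k) ⊆ Set.Icc (-ρ) ρ)
    (hneg : ∀ z : κ → ℂ, z ≠ 0 →
      schrodingerForm (fun t ↦ b₀ ^ 2 * t ^ 2 - (lam - 1 / 4 - rexp (2 * t₀) * c₁ - c₂))
        (fun t ↦ ∑ k, z k * g k t) < 0) {N : ℕ}
    (hN : ∀ r, Set.Icc (m r - ρ) (m r + ρ) ⊆ Set.Ioc l₂ (N * l₂)) {p₀ : ℝ × ℝ} {M : ℕ}
    (hM : ∀ V : Submodule ℂ (testSubmodule (cornerRect p₀ w₁ w₂)),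
      IsNegDefOn (shiftedForm (cornerRect p₀ w₁ w₂) t₀ b₀ lam) V → Module.finrank ℂ V ≤ M) :
    Fintype.card ι * Fintype.card κ ≤ N * M := by
  have hsum_neg (c : ι → κ → ℂ) (hc : c ≠ 0) :
      ∑ r, schrodingerForm (fun t ↦ b₀ ^ 2 * t ^ 2 - (lam - 1 / 4 - rexp (2 * t₀) * c₁ - c₂))
        (fun t ↦ ∑ k, c r k * g k t) < 0 := by
    obtain ⟨r, hr⟩ := Function.ne_iff.mp hc
    refine Finset.sum_neg' (fun q _ ↦ ?_) ⟨r, Finset.mem_univ r, hneg (c r) hr⟩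
    rcases eq_or_ne (c q) 0 with hq | hq
    · simp [hq, schrodingerForm]
    · exact (hneg (c q) hq).le
  have hcard := finrank_le_card_mul_of_sum_neg shiftedForm_isSymm hM
    (fun b : Fin N ↦ tileTrial hη₁ hη₂ hg m t₀ b₀ p₀ (b * l₂)) fun c hc ↦
      (sum_re_shiftedForm_tileTrial_le hη₁ hη₂ hg hl₁.le hw₁ hl₂ hw₂ hm hω hb₀ p₀ hρ hN c).trans_lt
        (mul_neg_of_pos_of_neg hl₁ (hsum_neg c hc))
  simpa [Module.finrank_pi_fintype] using hcard

end Trial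

section Counting

/-- The number of Landau levels `(2k + 1)β` below `μ`. -/
def landauCount (β μ : ℝ) : ℕ := ⌈(μ / β - 1) / 2⌉₊

lemma lt_landauCount_iff {β : ℝ} (hβ : 0 < β) {μ : ℝ} {k : ℕ} :
    k < landauCount β μ ↔ (2 * (k : ℝ) + 1) * β < μ := by
  rw [landauCount, Nat.lt_ceil, lt_div_iff₀ two_pos, lt_sub_iff_add_lt, lt_div_iff₀ hβ,
    mul_comm (k : ℝ)]

lemma landauCount_mono {β : ℝ} (hβ : 0 < β) : Monotone (landauCount β) := fun μ ν hμν ↦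
  Nat.ceil_mono (by gcongr)

lemma tsum_heav_eq_landauCount {β : ℝ} (hβ : 0 < β) (μ : ℝ) :
    ∑' k : ℕ, heav (μ - (2 * (k : ℝ) + 1) * β) = landauCount β μ := by
  have hheav (k : ℕ) : heav (μ - (2 * (k : ℝ) + 1) * β) =
      if k ∈ Finset.range (landauCount β μ) then 1 else 0 := by
    simp only [heav, sub_pos, Finset.mem_range, lt_landauCount_iff hβ]
  simp_rw [hheav]
  rw [tsum_eq_sum fun k hk ↦ if_neg hk, Finset.sum_ite_mem]
  simp

lemma div_mul_le_of_forall_packing {d l s : ℝ} {n M : ℕ} (hd : 0 < d) (hl : 0 < l)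
    (h : ∀ R N : ℕ, R * d + s ≤ N * l → R * n ≤ N * M) : l / d * n ≤ M := by
  by_contra! hlt
  rw [div_mul_eq_mul_div, lt_div_iff₀ hd] at hlt
  have hgap : 0 < l * n - M * d := sub_pos.mpr hlt
  obtain ⟨N, hN⟩ := exists_nat_gt (max (s / l) ((s + d) * n / (l * n - M * d)))
  obtain ⟨hNs, hNgap⟩ := max_lt_iff.mp hN
  rw [div_lt_iff₀ hl] at hNs
  rw [div_lt_iff₀ hgap] at hNgap
  have hfloor := Nat.floor_le (div_nonneg (sub_nonneg.mpr hNs.le) hd.le)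
  have hfloor' := Nat.lt_floor_add_one ((N * l - s) / d)
  set R := ⌊(N * l - s) / d⌋₊
  rw [le_div_iff₀ hd] at hfloor
  rw [div_lt_iff₀ hd] at hfloor'
  have hRN : (R : ℝ) * n ≤ N * M := mod_cast h R N (by linarith)
  nlinarith [mul_le_mul_of_nonneg_right hfloor'.le n.cast_nonneg,
    mul_le_mul_of_nonneg_right hRN hd.le]

lemma exp_neg_I_mul_add_nat_mul {κ d l : ℝ} (h : |κ| * d * l = 2 * π) (m : ℝ) (r : ℕ) :
    Complex.exp (-(Complex.I * κ * (m + r * d : ℝ) * l)) =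
      Complex.exp (-(Complex.I * κ * m * l)) := by
  rw [Complex.exp_eq_exp_iff_exists_int]
  have hC : ((|κ| : ℝ) : ℂ) * d * l = 2 * π := mod_cast h
  rcases abs_choice κ with hκ | hκ
  all_goals rw [hκ] at hC
  · refine ⟨-r, ?_⟩
    push_cast
    linear_combination -(Complex.I * r) * hC
  · refine ⟨r, ?_⟩
    push_cast at hC ⊢
    linear_combination Complex.I * r * hC

variable {l₁ w₁ c₁ l₂ w₂ c₂ t₀ b₀ lam : ℝ} {η₁ η₂ : ℝ → ℝ}

lemma landauCount_le_of_isTilingCutoff (hη₁ : IsTilingCutoff l₁ w₁ c₁ η₁)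
    (hη₂ : IsTilingCutoff l₂ w₂ c₂ η₂) (hl₁ : 0 < l₁) (hw₁ : w₁ ≤ 2 * l₁) (hl₂ : 0 < l₂)
    (hw₂ : w₂ ≤ 2 * l₂) (hb₀ : b₀ ≠ 0) {p₀ : ℝ × ℝ} {M : ℕ}
    (hM : ∀ V : Submodule ℂ (testSubmodule (cornerRect p₀ w₁ w₂)),
      IsNegDefOn (shiftedForm (cornerRect p₀ w₁ w₂) t₀ b₀ lam) V → Module.finrank ℂ V ≤ M) :
    l₁ * l₂ * |b₀| / (2 * π * rexp t₀) *
      landauCount |b₀| (lam - 1 / 4 - rexp (2 * t₀) * c₁ - c₂) ≤ M := by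
  have hβ : 0 < |b₀| := abs_pos.mpr hb₀
  obtain ⟨ρ, hρ, g, hg, hgρ, hneg⟩ := exists_oscillator_trial hβ fun k hk ↦
    (lt_landauCount_iff hβ (μ := lam - 1 / 4 - rexp (2 * t₀) * c₁ - c₂)).mp hk
  simp_rw [sq_abs] at hneg
  -- The smallest spacing of the wells for which all plane waves share one quasi-period.
  set d := 2 * π * rexp t₀ / (l₁ * |b₀|) with hd_def
  have hd : 0 < d := by positivity
  have hquot : l₁ * l₂ * |b₀| / (2 * π * rexp t₀) = l₂ / d := by
    rw [hd_def]
    field_simp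
  have hlattice : |rexp (-t₀) * b₀| * d * l₁ = 2 * π := by
    rw [hd_def, abs_mul, abs_of_pos (Real.exp_pos _), Real.exp_neg]
    field_simp
  rw [hquot]
  refine div_mul_le_of_forall_packing hd hl₂ (s := l₂ + 3 * ρ) fun R N hRN ↦ ?_
  have hinj : Function.Injective fun r : Fin R ↦ l₂ + 2 * ρ + r * d := fun r q hrq ↦ by
    simpa [hd.ne', Fin.val_inj] using hrq
  have hsub (r : Fin R) : Set.Icc (l₂ + 2 * ρ + r * d - ρ) (l₂ + 2 * ρ + r * d + ρ) ⊆
      Set.Ioc l₂ (N * l₂) := by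
    have hr : (r : ℝ) * d ≤ R * d := by
      gcongr
      exact r.2.le
    exact Set.Icc_subset_Ioc (by nlinarith [mul_nonneg r.val.cast_nonneg hd.le]) (by linarith)
  simpa using card_mul_card_le_of_tiling hη₁ hη₂ hg hl₁ hw₁ hl₂ hw₂ hinj
    (fun r : Fin R ↦ exp_neg_I_mul_add_nat_mul hlattice _ r) hb₀ hgρ hneg hsub hM

lemma exists_isTilingCutoff_of_width : ∃ C > 0, ∀ τ w : ℝ, 0 < τ → τ < 1 → 0 < w →
    ∃ η, IsTilingCutoff ((1 - τ / 2) * w) w ((C / (τ * w)) ^ 2) η := by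
  obtain ⟨C, hC, hcut⟩ := exists_isTilingCutoff
  refine ⟨2 * C, by positivity, fun τ w hτ hτ' hw ↦
    ⟨tilingCutoff ((1 - τ / 2) * w) (τ / 2 * w), ?_⟩⟩
  convert hcut ((1 - τ / 2) * w) (τ / 2 * w) (by positivity) (by gcongr; linarith) using 1
  · ring
  · field_simp

lemma Krect_eq_cornerRect (x₀ t₀ a ε₀ : ℝ) : Krect x₀ t₀ a ε₀ =
    cornerRect (x₀ - ε₀ * a * rexp t₀ / 2, t₀ - ε₀ / 2) (ε₀ * a * rexp t₀) ε₀ := by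
  rw [Krect, cornerRect]
  ring_nf

lemma exists_finrank_le_of_isNegDefOn_Krect (x₀ t₀ a ε₀ b₀ lam : ℝ) :
    ∃ n : ℕ, ∀ V : Submodule ℂ (testSubmodule (Krect x₀ t₀ a ε₀)),
      IsNegDefOn (shiftedForm (Krect x₀ t₀ a ε₀) t₀ b₀ lam) V → Module.finrank ℂ V ≤ n :=
  exists_finrank_le_of_isNegDefOn_shiftedForm
    ((Metric.isBounded_Ioo _ _).prod (Metric.isBounded_Ioo _ _))
    (measurableSet_Ioo.prod measurableSet_Ioo) t₀ b₀ lam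

lemma landauCount_le_NK0 {a ε₀ : ℝ} (x₀ : ℝ)
    (hη₁ : IsTilingCutoff l₁ (ε₀ * a * rexp t₀) c₁ η₁) (hη₂ : IsTilingCutoff l₂ ε₀ c₂ η₂)
    (hl₁ : 0 < l₁) (hw₁ : ε₀ * a * rexp t₀ ≤ 2 * l₁) (hl₂ : 0 < l₂) (hw₂ : ε₀ ≤ 2 * l₂)
    (hb₀ : b₀ ≠ 0) :
    l₁ * l₂ * |b₀| / (2 * π * rexp t₀) *
      landauCount |b₀| (lam - 1 / 4 - rexp (2 * t₀) * c₁ - c₂) ≤ NK0 x₀ t₀ a ε₀ b₀ lam := by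
  obtain ⟨n, hn⟩ := exists_finrank_le_of_isNegDefOn_Krect x₀ t₀ a ε₀ b₀ lam
  have hM (V) (hV : IsNegDefOn (shiftedForm (Krect x₀ t₀ a ε₀) t₀ b₀ lam) V) :=
    finrank_le_NK0 hn hV
  rw [Krect_eq_cornerRect] at hM
  exact landauCount_le_of_isTilingCutoff hη₁ hη₂ hl₁ hw₁ hl₂ hw₂ hb₀ hM

lemma localization_error_le {a₀ a : ℝ} (ha₀ : 0 < a₀) (ha : 1 / a₀ < a) (C τ ε₀ t₀ : ℝ) :
    rexp (2 * t₀) * (C / (τ * (ε₀ * a * rexp t₀))) ^ 2 + (C / (τ * ε₀)) ^ 2 ≤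
      C ^ 2 * (a₀ ^ 2 + 1) / (τ * ε₀) ^ 2 := by
  have ha_inv : a⁻¹ ≤ a₀ := inv_le_of_inv_le₀ ha₀ (by simpa using ha.le)
  have ha_pos : 0 < a := (one_div_pos.mpr ha₀).trans ha
  calc rexp (2 * t₀) * (C / (τ * (ε₀ * a * rexp t₀))) ^ 2 + (C / (τ * ε₀)) ^ 2
      = C ^ 2 * (a⁻¹ ^ 2 + 1) / (τ * ε₀) ^ 2 := by
        rw [two_mul, Real.exp_add]
        field_simp
    _ ≤ C ^ 2 * (a₀ ^ 2 + 1) / (τ * ε₀) ^ 2 := by gcongr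

theorem counting_lower_bound_rectangle_general (a₀ : ℝ) (ha₀ : 0 < a₀) :
    ∃ C₀ > 0, ∀ a ε₀ x₀ t₀ b₀ lam : ℝ, 1 / a₀ < a → 0 < ε₀ → b₀ ≠ 0 →
      ∀ τ : ℝ, 0 < τ → τ < 1 →
        (1 - τ) ^ 2 * ((a * ε₀ ^ 2 * rexp t₀) * |b₀| / (2 * π * rexp t₀)) *
            ∑' k : ℕ, heav (lam - 1 / 4 - C₀ / (τ * ε₀) ^ 2 - (2 * (k : ℝ) + 1) * |b₀|) ≤
          NK0 x₀ t₀ a ε₀ b₀ lam := by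
  obtain ⟨C, hC, hcut⟩ := exists_isTilingCutoff_of_width
  refine ⟨C ^ 2 * (a₀ ^ 2 + 1), by positivity, fun a ε₀ x₀ t₀ b₀ lam ha hε hb₀ τ hτ hτ' ↦ ?_⟩
  have ha_pos : 0 < a := (one_div_pos.mpr ha₀).trans ha
  have hw : 0 < ε₀ * a * rexp t₀ := by positivity
  have hτ_half : 0 < 1 - τ / 2 := by linarith
  obtain ⟨η₁, hη₁⟩ := hcut τ _ hτ hτ' hw
  obtain ⟨η₂, hη₂⟩ := hcut τ ε₀ hτ hτ' hε
  have hμ := landauCount_mono (abs_pos.mpr hb₀) <|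
    sub_le_sub_left (localization_error_le ha₀ ha C τ ε₀ t₀) (lam - 1 / 4)
  rw [← sub_sub] at hμ
  rw [tsum_heav_eq_landauCount (abs_pos.mpr hb₀)]
  have harea : (1 - τ) ^ 2 * ((a * ε₀ ^ 2 * rexp t₀) * |b₀| / (2 * π * rexp t₀)) ≤
      (1 - τ / 2) * (ε₀ * a * rexp t₀) * ((1 - τ / 2) * ε₀) * |b₀| / (2 * π * rexp t₀) :=
    calc (1 - τ) ^ 2 * ((a * ε₀ ^ 2 * rexp t₀) * |b₀| / (2 * π * rexp t₀))
        ≤ (1 - τ / 2) ^ 2 * ((a * ε₀ ^ 2 * rexp t₀) * |b₀| / (2 * π * rexp t₀)) := by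
          gcongr
          linarith
      _ = _ := by ring
  exact (mul_le_mul harea (Nat.cast_le.mpr hμ) (by positivity) (by positivity)).trans
    (landauCount_le_NK0 x₀ hη₁ hη₂ (by positivity) (by nlinarith) (by positivity) (by nlinarith)
      hb₀)

end Counting

/-- lower bound for the counting function of `q^{A⁰,0}_K`. -/
theorem counting_lower_bound_rectangle
    (a₀ : ℝ) (ha₀ : 1 < a₀) :
    ∃ C₀ > 0, ∀ a ε₀ x₀ t₀ b₀ lam : ℝ, 1 / a₀ < a → a ≤ a₀ →
      0 < ε₀ → ε₀ < 1 → b₀ ≠ 0 →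
      (ε₀⁻¹) ^ 2 / C₀ ≤ |b₀| → |b₀| ≤ lam →
      ∀ τ : ℝ, 0 < τ → τ < 1 →
        (1 - τ) ^ 2 * ((a * ε₀ ^ 2 * Real.exp t₀) * |b₀| / (2 * π * Real.exp t₀)) *
            ∑' k : ℕ, heav (lam - 1/4 - C₀ / (τ * ε₀) ^ 2 - (2 * (k : ℝ) + 1) * |b₀|)
          ≤ (NK0 x₀ t₀ a ε₀ b₀ lam : ℝ) := by
  obtain ⟨C₀, hC₀, h⟩ := counting_lower_bound_rectangle_general a₀ (zero_lt_one.trans ha₀)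
  exact ⟨C₀, hC₀, fun a ε₀ x₀ t₀ b₀ lam ha _ hε _ hb₀ _ _ ↦ h a ε₀ x₀ t₀ b₀ lam ha hε hb₀⟩
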